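/- Let n ≥ 1, Q = 2n+2 and 1 < p < (Q+2)/(Q−2). Then the equation −Δ_H u = u^p on ℍⁿ admits no positive smooth solution; moreover, any nonnegative smooth solution of −Δ_H u = u^p on ℍⁿ must be identically zero. -/

import Mathlib

open Complex Filter Topology MeasureTheory

noncomputable section

/-- The Heisenberg group ℍⁿ as ℂⁿ × ℝ. -/
abbrev Heis (n : ℕ) := (Fin n → ℂ) × ℝ

namespace Heis

variable {n : ℕ}

/-- Hermitian inner product ⟨z,z'⟩ = Σ_j z_j conj(z'_j). -/
def hermInner (z w : Fin n → ℂ) : ℂ := ∑ j, z j * (starRingEnd ℂ) (w j)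

/-- Squared Euclidean norm |z|² = Σ_j |z_j|². -/
def nsq (z : Fin n → ℂ) : ℝ := ∑ j, Complex.normSq (z j)

/-- Group law (z,t)·(z',t') = (z+z', t+t'+2 Im⟨z,z'⟩). -/
def hmul (a b : Heis n) : Heis n :=
  (a.1 + b.1, a.2 + b.2 + 2 * (hermInner a.1 b.1).im)

/-- Group inverse: ζ⁻¹ = −ζ. -/
def hinv (a : Heis n) : Heis n := (-a.1, -a.2)

/-- Korányi norm |(z,t)|_H = (|z|⁴ + t²)^{1/4}. -/
def korNorm (a : Heis n) : ℝ := ((nsq a.1) ^ 2 + a.2 ^ 2) ^ ((1 : ℝ)/4)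

/-- Korányi distance d_H(ξ,ζ) = |ζ⁻¹·ξ|_H. -/
def dH (a b : Heis n) : ℝ := korNorm (hmul (hinv b) a)

/-- Open Korányi ball B_λ(ξ). -/
def ball (ξ : Heis n) (lam : ℝ) : Set (Heis n) := {ζ | dH ξ ζ < lam}

/-- Left translation τ_ξ. -/
def tau (ξ ζ : Heis n) : Heis n := hmul ξ ζ

/-- Dilation δ_λ(z,t) = (λz, λ²t). -/
def dil (lam : ℝ) (a : Heis n) : Heis n := (fun j => (lam : ℂ) * a.1 j, lam ^ 2 * a.2)

/-- Rotation ρ_M(z,t) = (Mz,t). -/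
def rot (M : Matrix (Fin n) (Fin n) ℂ) (a : Heis n) : Heis n := (M.mulVec a.1, a.2)

/-- Inversion ι(z,t) = (conj z, −t). -/
def iota (a : Heis n) : Heis n := (fun j => (starRingEnd ℂ) (a.1 j), -a.2)

/-- w = t + i|z|². -/
def wC (a : Heis n) : ℂ := (a.2 : ℂ) + Complex.I * ((nsq a.1 : ℝ) : ℂ)

/-- CR inversion 𝒥(z,t) = (z/w, −t/|w|²). -/
def crInv (a : Heis n) : Heis n :=
  (fun j => a.1 j / wC a, -a.2 / Complex.normSq (wC a))

/-- Angles θ_k for the rotation matrix M_{ξ,β}. -/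
def theta (ξ : Heis n) (β : ℝ) (k : Fin n) : ℝ :=
  if ξ.1 k ≠ 0 then 2 * (ξ.1 k).arg + (wC ξ + Complex.I * (β : ℂ)).arg else 0

/-- The unitary diagonal matrix M_{ξ,β} = diag(e^{iθ₁},…,e^{iθₙ}). -/
def Mmat (ξ : Heis n) (β : ℝ) : Matrix (Fin n) (Fin n) ℂ :=
  Matrix.diagonal fun k => Complex.exp (Complex.I * ((theta ξ β k : ℝ) : ℂ))

/-- Generalized CR inversion Φ_{ξ,λ}^β = τ_ξ ∘ ρ_{M_{ξ,β}} ∘ δ_{λ²} ∘ 𝒥 ∘ ι ∘ τ_ξ⁻¹. -/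
def Phi (ξ : Heis n) (lam β : ℝ) (ζ : Heis n) : Heis n :=
  tau ξ (rot (Mmat ξ β) (dil (lam ^ 2) (crInv (iota (hmul (hinv ξ) ζ)))))

/-- Direction of the vector field X_j at p. -/
def XVec (j : Fin n) (p : Heis n) : Heis n := (Pi.single j (1 : ℂ), 2 * (p.1 j).im)

/-- Direction of the vector field Y_j at p. -/
def YVec (j : Fin n) (p : Heis n) : Heis n := (Pi.single j Complex.I, -2 * (p.1 j).re)

/-- The vector field X_j acting on functions. -/
def Xop (j : Fin n) (u : Heis n → ℝ) (p : Heis n) : ℝ := fderiv ℝ u p (XVec j p)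

/-- The vector field Y_j acting on functions. -/
def Yop (j : Fin n) (u : Heis n → ℝ) (p : Heis n) : ℝ := fderiv ℝ u p (YVec j p)

/-- Sub-Laplacian Δ_H = Σ_j (X_j² + Y_j²). -/
def subLap (u : Heis n → ℝ) (p : Heis n) : ℝ :=
  ∑ j, (Xop j (Xop j u) p + Yop j (Yop j u) p)

/-- Squared length of the horizontal gradient |∇_H u|² = Σ_j ((X_j u)² + (Y_j u)²). -/
def gradHSq (u : Heis n → ℝ) (p : Heis n) : ℝ :=
  ∑ j, ((Xop j u p) ^ 2 + (Yop j u p) ^ 2)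

/-- Generalized Kelvin transform u_{ξ,λ}^β(η) = (λ/d_H(η,ξ))^{Q−2} u(Φ_{ξ,λ}^β(η)), Q−2 = 2n. -/
def kelvin (u : Heis n → ℝ) (ξ : Heis n) (lam β : ℝ) (η : Heis n) : ℝ :=
  (lam / dH η ξ) ^ (2 * n) * u (Phi ξ lam β η)

/-- The filter |ζ|_H → ∞ on ℍⁿ. -/
def atInftyH (n : ℕ) : Filter (Heis n) := Filter.comap korNorm Filter.atTop

end Heis

open Heis

structure HData (n : ℕ) (A : Type*) [CommRing A] [Algebra ℂ A] where
  Z : Fin n → Derivation ℂ A A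
  Zb : Fin n → Derivation ℂ A A
  T : Derivation ℂ A A
  J : A
  hJ : J * J = -1
  ZJ : ∀ i, Z i J = 0
  ZbJ : ∀ i, Zb i J = 0
  TJ : T J = 0
  ZZ : ∀ i j x, Z i (Z j x) = Z j (Z i x)
  ZbZb : ∀ i j x, Zb i (Zb j x) = Zb j (Zb i x)
  ZbZ : ∀ i j x, Zb i (Z j x) = Z j (Zb i x) + if i = j then 2 * J * T x else 0
  ZT : ∀ i x, Z i (T x) = T (Z i x)
  ZbT : ∀ i x, Zb i (T x) = T (Zb i x)

namespace HData
open Finset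
variable {n : ℕ} {A : Type*} [CommRing A] [Algebra ℂ A] (S : HData n A) (f F K : A)

def a : A := ∑ i, S.Z i f * S.Zb i f
def b : A := S.a f + F
def g : A := S.b f F - S.J * S.T f
def gb : A := S.b f F + S.J * S.T f
def D2 (i j : Fin n) : A := S.Z i (S.Z j f) - 2 * S.Z i f * S.Z j f
def D2b (i j : Fin n) : A := S.Zb i (S.Zb j f) - 2 * S.Zb i f * S.Zb j f
/-- `E2 i j = f_{i \bar j} + g δ_{ij}` -/
def E2 (i j : Fin n) : A := S.Zb j (S.Z i f) + if i = j then S.g f F else 0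
def D (i : Fin n) : A := ∑ j, S.D2 f i j * S.Zb j f
def Db (i : Fin n) : A := ∑ j, S.D2b f i j * S.Z j f
def E (i : Fin n) : A := ∑ j, S.E2 f F i j * S.Z j f
def Eb (i : Fin n) : A := ∑ j, S.E2 f F j i * S.Zb j f
def G (i : Fin n) : A := S.J * S.T (S.Z i f) + S.g f F * S.Z i f
def Gb (i : Fin n) : A := -(S.J * S.T (S.Zb i f)) + S.gb f F * S.Zb i f

lemma Zb_a (i : Fin n) : S.Zb i (S.a f) =
    S.Db f i + S.Eb f F i + (2 * S.a f - S.g f F) * S.Zb i f := by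
  have h1 : S.Db f i = ∑ j, S.Z j f * S.Zb i (S.Zb j f) - 2 * S.a f * S.Zb i f := by
    simp only [Db, D2b, a, mul_sum, sum_mul, ← sum_sub_distrib]
    exact sum_congr rfl fun j _ => by ring
  have h2 : S.Eb f F i = ∑ j, S.Zb j f * S.Zb i (S.Z j f) + S.g f F * S.Zb i f := by
    simp only [Eb, E2, add_mul, sum_add_distrib, ite_mul, zero_mul, sum_ite_eq', mem_univ, if_true]
    congr 1
    exact sum_congr rfl fun j _ => by ring
  rw [h1, h2]
  conv_lhs => rw [a]
  simp only [map_sum, Derivation.leibniz, smul_eq_mul, sum_add_distrib]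
  ring

lemma Zb_b (hF : ∀ i, S.Zb i F = K * F * S.Zb i f) (i : Fin n) : S.Zb i (S.b f F) =
    S.Db f i + S.Eb f F i + S.gb f F * S.Zb i f + (K - 2) * F * S.Zb i f := by
  rw [b, map_add, S.Zb_a f F, hF, gb, g, b]; ring

lemma J_Zb_T (i : Fin n) : S.J * S.Zb i (S.T f) = - S.Gb f F i + S.gb f F * S.Zb i f := by
  rw [Gb, S.ZbT]; ring

lemma Zb_g (hF : ∀ i, S.Zb i F = K * F * S.Zb i f) (i : Fin n) : S.Zb i (S.g f F) =
    S.Db f i + S.Eb f F i + S.Gb f F i + (K - 2) * F * S.Zb i f := by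
  rw [g, map_sub, S.Zb_b f F K hF, Derivation.leibniz, S.ZbJ, smul_eq_mul, S.J_Zb_T f F]
  simp; ring

lemma Z_a (i : Fin n) : S.Z i (S.a f) =
    S.D f i + S.E f F i + (2 * S.a f - S.gb f F) * S.Z i f := by
  have h1 : S.D f i = ∑ j, S.Zb j f * S.Z i (S.Z j f) - 2 * S.a f * S.Z i f := by
    simp only [D, D2, a, mul_sum, sum_mul, ← sum_sub_distrib]
    exact sum_congr rfl fun j _ => by ring
  have h2 : S.E f F i = ∑ j, S.Z j f * S.Z i (S.Zb j f) + S.gb f F * S.Z i f := by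
    simp only [E, E2, add_mul, sum_add_distrib, ite_mul, zero_mul, sum_ite_eq, mem_univ, if_true,
      S.ZbZ, sum_ite_eq', gb, g]
    have : ∑ x, S.Z i (S.Zb x f) * S.Z x f = ∑ j, S.Z j f * S.Z i (S.Zb j f) :=
      sum_congr rfl fun j _ => by ring
    rw [this]; ring
  rw [h1, h2]
  conv_lhs => rw [a]
  simp only [map_sum, Derivation.leibniz, smul_eq_mul, sum_add_distrib]
  ring

lemma Z_gb (hF : ∀ i, S.Z i F = K * F * S.Z i f) (i : Fin n) : S.Z i (S.gb f F) =
    S.D f i + S.E f F i + S.G f F i + (K - 2) * F * S.Z i f := by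
  rw [gb, b, map_add, map_add, S.Z_a f F, hF, Derivation.leibniz, S.ZJ, smul_eq_mul, G, S.ZT,
    gb, g, b]
  simp; ring

lemma Z_g (hF : ∀ i, S.Z i F = K * F * S.Z i f) (i : Fin n) : S.Z i (S.g f F) =
    S.D f i + S.E f F i - S.G f F i + 2 * S.g f F * S.Z i f + (K - 2) * F * S.Z i f := by
  rw [g, b, map_sub, map_add, S.Z_a f F, hF, Derivation.leibniz, S.ZJ, smul_eq_mul, G, S.ZT,
    gb, g, b]
  simp; ring

/-- trace equation in the other order -/
lemma trace' (heq : ∑ i, S.Zb i (S.Z i f) = - (n : A) * S.g f F) :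
    ∑ i, S.Z i (S.Zb i f) = - (n : A) * S.gb f F := by
  have : ∑ i, S.Zb i (S.Z i f) = ∑ i, S.Z i (S.Zb i f) + n * (2 * S.J * S.T f) := by
    simp [S.ZbZ, sum_add_distrib]
  rw [this] at heq
  rw [gb]; rw [g] at heq
  linear_combination heq

lemma nat_leib (x : A) (V : Derivation ℂ A A) : V ((n : A) * x) = n * V x := by
  rw [← nsmul_eq_mul, map_nsmul, nsmul_eq_mul]

lemma sumZL (hF : ∀ i, S.Z i F = K * F * S.Z i f)
    (heq : ∑ i, S.Zb i (S.Z i f) = - (n : A) * S.g f F) (j : Fin n) :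
    ∑ i, S.Z i (S.Zb i (S.Z j f)) =
     - (n : A) * (S.D f j + S.E f F j + S.G f F j + (K - 2) * F * S.Z j f)
     + 2 * S.J * S.T (S.Z j f) := by
  have h2 : ∀ i, S.Z i (S.Zb i (S.Z j f)) = S.Z j (S.Z i (S.Zb i f)) +
      if i = j then 2 * S.J * S.T (S.Z j f) else 0 := by
    intro i
    rw [S.ZbZ, map_add, S.ZZ i j]
    split_ifs with h
    · subst h
      congr 1
      rw [mul_assoc, two_mul, map_add, Derivation.leibniz, S.ZJ, S.ZT]; simp; ring
    · simp
  simp only [h2, sum_add_distrib, sum_ite_eq', mem_univ, if_true]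
  rw [← map_sum, S.trace' f F heq, neg_mul, map_neg, nat_leib, S.Z_gb f F K hF]
  ring

lemma divD2 (hF : ∀ i, S.Z i F = K * F * S.Z i f)
    (heq : ∑ i, S.Zb i (S.Z i f) = - (n : A) * S.g f F) (j : Fin n) :
    ∑ i, S.Zb i (S.D2 f i j) = - n * S.D f j - (n + 2) * S.E f F j + (n + 2) * S.G f F j
      - n * ((K - 2) * F * S.Z j f) := by
  have h1 : ∑ i, S.Zb i (S.Z i (S.Z j f)) = ∑ i, S.Z i (S.Zb i (S.Z j f))
     + n * (2 * S.J * S.T (S.Z j f)) := by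
    simp [S.ZbZ _ _ (S.Z j f), sum_add_distrib]
  have h3 : S.E f F j = ∑ i, S.Z i f * S.Zb i (S.Z j f) + S.g f F * S.Z j f := by
    simp only [E, E2, add_mul, sum_add_distrib, ite_mul, zero_mul, sum_ite_eq, mem_univ, if_true]
    congr 1
    exact sum_congr rfl fun j _ => by ring
  have h4 : ∑ i, S.Zb i (S.D2 f i j) = ∑ i, S.Zb i (S.Z i (S.Z j f))
     - 2 * (∑ i, S.Z i f * S.Zb i (S.Z j f)) - 2 * S.Z j f * ∑ i, S.Zb i (S.Z i f) := by
    simp only [mul_sum, ← sum_sub_distrib]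
    refine sum_congr rfl fun i _ => ?_
    rw [D2, map_sub, mul_assoc, two_mul, map_add, Derivation.leibniz]
    simp; ring
  rw [h4, h1, heq, S.sumZL f F K hF heq]
  have h5 : S.G f F j = S.J * S.T (S.Z j f) + S.g f F * S.Z j f := rfl
  linear_combination (-2) * h3 * (-1) - (2*n+2) * h5

lemma divE2 (hF : ∀ i, S.Zb i F = K * F * S.Zb i f)
    (heq : ∑ i, S.Zb i (S.Z i f) = - (n : A) * S.g f F) (j : Fin n) :
    ∑ i, S.Zb i (S.E2 f F i j) = - (n - 1) * (S.Db f j + S.Eb f F j + S.Gb f F j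
      + (K - 2) * F * S.Zb j f) := by
  have h4 : ∑ i, S.Zb i (S.E2 f F i j) = S.Zb j (∑ i, S.Zb i (S.Z i f)) + S.Zb j (S.g f F) := by
    simp only [E2, map_add, sum_add_distrib, map_sum]
    congr 1
    · exact sum_congr rfl fun i _ => S.ZbZb _ _ _
    · rw [sum_eq_single j] <;> simp +contextual
  rw [h4, heq, neg_mul, map_neg, nat_leib, S.Zb_g f F K hF]
  ring

def ip (x y : Fin n → A) : A := ∑ i, x i * y i
def TD : A := ∑ i, ∑ j, S.D2 f i j * S.D2b f i j
def TE : A := ∑ i, ∑ j, S.E2 f F i j * S.E2 f F j i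
def dv (X : Fin n → A) : A := ∑ i, S.Zb i (X i)
def p (i : Fin n) : A := S.Z i f
def pb (i : Fin n) : A := S.Zb i f

lemma divD (hF : ∀ i, S.Z i F = K * F * S.Z i f)
    (heq : ∑ i, S.Zb i (S.Z i f) = - (n : A) * S.g f F) :
    S.dv (S.D f) = S.TD f + (2 - n) * ip (S.D f) (S.pb f) - (n + 2) * ip (S.E f F) (S.pb f)
      + (n + 2) * ip (S.G f F) (S.pb f) - n * ((K - 2) * F * S.a f) := by
  have h0 : S.dv (S.D f) = ∑ j, (∑ i, S.Zb i (S.D2 f i j)) * S.Zb j f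
      + ∑ i, ∑ j, S.D2 f i j * S.Zb i (S.Zb j f) := by
    simp only [dv, D, map_sum, Derivation.leibniz, smul_eq_mul, sum_add_distrib, sum_mul]
    rw [add_comm]
    congr 1
    rw [sum_comm]
    exact sum_congr rfl fun j _ => sum_congr rfl fun i _ => by ring
  have h1 : ∑ i, ∑ j, S.D2 f i j * S.Zb i (S.Zb j f) = S.TD f + 2 * ip (S.D f) (S.pb f) := by
    simp only [TD, ip, D, D2b, mul_sum, sum_mul, ← sum_add_distrib, pb]
    exact sum_congr rfl fun j _ => sum_congr rfl fun i _ => by ring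
  have h2 : ∑ j, (∑ i, S.Zb i (S.D2 f i j)) * S.Zb j f =
     -n * ip (S.D f) (S.pb f) - (n + 2) * ip (S.E f F) (S.pb f)
      + (n + 2) * ip (S.G f F) (S.pb f) - n * ((K - 2) * F * S.a f) := by
    simp only [S.divD2 f F K hF heq, ip, mul_sum, ← sum_add_distrib, ← sum_sub_distrib, a, pb]
    exact sum_congr rfl fun i _ => by ring
  rw [h0, h1, h2]; ring

lemma traceE (heq : ∑ i, S.Zb i (S.Z i f) = - (n : A) * S.g f F) :
    ∑ i, S.E2 f F i i = 0 := by
  simp [E2, sum_add_distrib, heq]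

lemma divE (hF : ∀ i, S.Zb i F = K * F * S.Zb i f)
    (heq : ∑ i, S.Zb i (S.Z i f) = - (n : A) * S.g f F) :
    S.dv (S.E f F) = S.TE f F - (n - 1) * (ip (S.Db f) (S.p f) + ip (S.Eb f F) (S.p f)
      + ip (S.Gb f F) (S.p f) + (K - 2) * F * S.a f) := by
  have h0 : S.dv (S.E f F) = ∑ j, (∑ i, S.Zb i (S.E2 f F i j)) * S.Z j f
      + ∑ i, ∑ j, S.E2 f F i j * S.Zb i (S.Z j f) := by
    simp only [dv, E, map_sum, Derivation.leibniz, smul_eq_mul, sum_add_distrib, sum_mul]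
    rw [add_comm]
    congr 1
    rw [sum_comm]
    exact sum_congr rfl fun j _ => sum_congr rfl fun i _ => by ring
  have h1 : ∑ i, ∑ j, S.E2 f F i j * S.Zb i (S.Z j f) = S.TE f F := by
    have : S.TE f F = ∑ i, ∑ j, S.E2 f F i j * S.Zb i (S.Z j f)
        + S.g f F * ∑ i, S.E2 f F i i := by
      simp only [TE, mul_sum, ← sum_add_distrib]
      refine sum_congr rfl fun i _ => ?_
      have h : ∀ j, S.E2 f F j i = S.Zb i (S.Z j f) + if j = i then S.g f F else 0 := fun j => rfl
      simp only [h, mul_add, sum_add_distrib, mul_ite, mul_zero, sum_ite_eq', mem_univ, if_true]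
      ring
    rw [this, S.traceE f F heq]; ring
  have h2 : ∑ j, (∑ i, S.Zb i (S.E2 f F i j)) * S.Z j f =
      - (n - 1) * (ip (S.Db f) (S.p f) + ip (S.Eb f F) (S.p f)
      + ip (S.Gb f F) (S.p f) + (K - 2) * F * S.a f) := by
    simp only [S.divE2 f F K hF heq, ip, mul_sum, ← sum_add_distrib, a, p]
    exact sum_congr rfl fun i _ => by ring
  rw [h0, h1, h2]; ring

lemma J_T_a : S.J * S.T (S.a f) = ip (S.G f F) (S.pb f) - ip (S.Gb f F) (S.p f)
    + 2 * S.J * S.T f * S.a f := by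
  have : 2 * S.J * S.T f = S.gb f F - S.g f F := by rw [g, gb]; ring
  rw [this]
  simp only [a, ip, map_sum, mul_sum, ← sum_add_distrib, ← sum_sub_distrib, G, Gb, p, pb]
  exact sum_congr rfl fun i _ => by rw [Derivation.leibniz]; simp only [smul_eq_mul]; ring

lemma divG (hF : ∀ i, S.Zb i F = K * F * S.Zb i f) (hFT : S.T F = K * F * S.T f)
    (heq : ∑ i, S.Zb i (S.Z i f) = - (n : A) * S.g f F) :
    S.dv (S.G f F) = - n * S.T (S.T f)
      - n * (ip (S.G f F) (S.pb f) - ip (S.Gb f F) (S.p f) + 2 * S.J * S.T f * S.a f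
        + S.J * K * F * S.T f)
      - n * S.g f F ^ 2 + ip (S.Db f) (S.p f) + ip (S.Eb f F) (S.p f)
      + ip (S.Gb f F) (S.p f) + (K - 2) * F * S.a f := by
  have h0 : S.dv (S.G f F) = S.J * S.T (∑ i, S.Zb i (S.Z i f)) +
     S.g f F * (∑ i, S.Zb i (S.Z i f)) + ∑ i, S.Zb i (S.g f F) * S.Z i f := by
    simp only [dv, G, map_sum, mul_sum, ← sum_add_distrib]
    refine sum_congr rfl fun i _ => ?_
    rw [map_add, Derivation.leibniz, Derivation.leibniz, S.ZbJ, S.ZbT]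
    simp only [smul_eq_mul]; ring
  have h1 : ∑ i, S.Zb i (S.g f F) * S.Z i f = ip (S.Db f) (S.p f) + ip (S.Eb f F) (S.p f)
      + ip (S.Gb f F) (S.p f) + (K - 2) * F * S.a f := by
    simp only [S.Zb_g f F K hF, ip, a, mul_sum, ← sum_add_distrib, p]
    exact sum_congr rfl fun i _ => by ring
  have h2 : S.J * S.T (S.g f F) = S.J * S.T (S.a f) + S.J * K * F * S.T f + S.T (S.T f) := by
    rw [g, b, map_sub, map_add, hFT, Derivation.leibniz, S.TJ]
    simp only [smul_eq_mul]
    linear_combination (- S.T (S.T f)) * S.hJ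
  rw [h0, heq, h1, neg_mul, map_neg, nat_leib]
  linear_combination (-n) * h2 - n * S.J_T_a f F

def W (i : Fin n) : A := (S.b f F + 2 * S.J * S.T f) * S.E f F i
  + (S.b f F - 2 * S.J * S.T f) * S.D f i - 3 * S.J * S.T f * S.G f F i

lemma dv_mul (x : A) (X : Fin n → A) :
    S.dv (fun i => x * X i) = ip (fun i => S.Zb i x) X + x * S.dv X := by
  simp only [dv, ip, mul_sum, ← sum_add_distrib, Derivation.leibniz, smul_eq_mul]
  exact sum_congr rfl fun i _ => by ring

lemma dv_add (X Y : Fin n → A) : S.dv (fun i => X i + Y i) = S.dv X + S.dv Y := by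
  simp only [dv, map_add, sum_add_distrib]

lemma dv_sub (X Y : Fin n → A) : S.dv (fun i => X i - Y i) = S.dv X - S.dv Y := by
  simp only [dv, map_sub, sum_sub_distrib]

lemma dv_exp (e m N : A) (he : ∀ i, S.Zb i e = m * e * S.Zb i f) (X : Fin n → A) :
    S.dv (fun i => e * (N * X i)) = e * (N * (m * ip (S.pb f) X + S.dv X)
      + ip (fun i => S.Zb i N) X) := by
  rw [S.dv_mul, S.dv_mul]
  have : ip (fun i => S.Zb i e) (fun i => N * X i) = m * e * N * ip (S.pb f) X := by
    simp only [ip, mul_sum, he, pb]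
    exact sum_congr rfl fun i _ => by ring
  rw [this]; ring

lemma divW (hF : ∀ i, S.Zb i F = K * F * S.Zb i f) :
    S.dv (S.W f F) = (ip (S.Eb f F) (S.E f F) + ip (S.Db f) (S.E f F)
        - 2 * ip (S.Gb f F) (S.E f F) + (3 * S.gb f F + (K - 2) * F) * ip (S.E f F) (S.pb f))
      + (ip (S.Db f) (S.D f) + ip (S.Eb f F) (S.D f) + 2 * ip (S.Gb f F) (S.D f)
        + (- S.gb f F + (K - 2) * F) * ip (S.D f) (S.pb f))
      + (3 * ip (S.Gb f F) (S.G f F) - 3 * S.gb f F * ip (S.G f F) (S.pb f))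
      + (S.b f F + 2 * S.J * S.T f) * S.dv (S.E f F)
      + (S.b f F - 2 * S.J * S.T f) * S.dv (S.D f)
      - 3 * S.J * S.T f * S.dv (S.G f F) := by
  have hJT : ∀ i, S.Zb i (S.J * S.T f) = - S.Gb f F i + S.gb f F * S.Zb i f := by
    intro i
    rw [Derivation.leibniz, S.ZbJ, smul_eq_mul, S.J_Zb_T f F]; simp
  have h2 : ∀ i, S.Zb i (2 * S.J * S.T f) = 2 * (- S.Gb f F i + S.gb f F * S.Zb i f) := by
    intro i; rw [mul_assoc, two_mul, map_add, hJT]; ring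
  have h3 : ∀ i, S.Zb i (3 * S.J * S.T f) = 3 * (- S.Gb f F i + S.gb f F * S.Zb i f) := by
    intro i
    have : 3 * S.J * S.T f = S.J * S.T f + (S.J * S.T f + S.J * S.T f) := by ring
    rw [this, map_add, map_add, hJT]; ring
  unfold W
  rw [S.dv_sub, S.dv_add, S.dv_mul, S.dv_mul, S.dv_mul]
  simp only [map_add, map_sub, h2, h3, S.Zb_b f F K hF]
  have e1 : ∀ X : Fin n → A, ip (fun i => S.Db f i + S.Eb f F i + S.gb f F * (S.Zb i) f
      + (K - 2) * F * (S.Zb i) f + 2 * (-S.Gb f F i + S.gb f F * (S.Zb i) f)) X =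
      ip (S.Db f) X + ip (S.Eb f F) X - 2 * ip (S.Gb f F) X
      + (3 * S.gb f F + (K - 2) * F) * ip X (S.pb f) := by
    intro X
    simp only [ip, mul_sum, ← sum_add_distrib, ← sum_sub_distrib, pb]
    exact sum_congr rfl fun i _ => by ring
  have e2 : ∀ X : Fin n → A, ip (fun i => S.Db f i + S.Eb f F i + S.gb f F * (S.Zb i) f
      + (K - 2) * F * (S.Zb i) f - 2 * (-S.Gb f F i + S.gb f F * (S.Zb i) f)) X =
      ip (S.Db f) X + ip (S.Eb f F) X + 2 * ip (S.Gb f F) X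
      + (- S.gb f F + (K - 2) * F) * ip X (S.pb f) := by
    intro X
    simp only [ip, mul_sum, ← sum_add_distrib, ← sum_sub_distrib, pb]
    exact sum_congr rfl fun i _ => by ring
  have e3 : ∀ X : Fin n → A, ip (fun i => 3 * (-S.Gb f F i + S.gb f F * (S.Zb i) f)) X =
      - 3 * ip (S.Gb f F) X + 3 * S.gb f F * ip X (S.pb f) := by
    intro X
    simp only [ip, mul_sum, ← sum_add_distrib, pb]
    exact sum_congr rfl fun i _ => by ring
  rw [e1, e2, e3]; ring

lemma divp (heq : ∑ i, S.Zb i (S.Z i f) = - (n : A) * S.g f F) :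
    S.dv (S.p f) = - (n : A) * S.g f F := heq

lemma divU (heq : ∑ i, S.Zb i (S.Z i f) = - (n : A) * S.g f F) :
    S.dv (fun i => S.J * S.T f * S.p f i) = - ip (S.Gb f F) (S.p f) + S.gb f F * S.a f
      - n * S.J * S.T f * S.g f F := by
  rw [S.dv_mul, S.divp f F heq]
  have : ip (fun i => S.Zb i (S.J * S.T f)) (S.p f) = - ip (S.Gb f F) (S.p f)
      + S.gb f F * S.a f := by
    simp only [ip, mul_sum, ← sum_add_distrib, ← sum_neg_distrib, p, a]
    refine sum_congr rfl fun i _ => ?_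
    rw [Derivation.leibniz, S.ZbJ, smul_eq_mul, S.J_Zb_T f F]; simp; ring
  rw [this]; ring

lemma diva2 (heq : ∑ i, S.Zb i (S.Z i f) = - (n : A) * S.g f F) :
    S.dv (fun i => S.a f * S.a f * S.p f i) = 2 * S.a f * (ip (S.Db f) (S.p f)
      + ip (S.Eb f F) (S.p f) + (2 * S.a f - S.g f F) * S.a f)
      - n * S.a f ^ 2 * S.g f F := by
  rw [S.dv_mul, S.divp f F heq]
  have : ip (fun i => S.Zb i (S.a f * S.a f)) (S.p f) = 2 * S.a f * (ip (S.Db f) (S.p f)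
      + ip (S.Eb f F) (S.p f) + (2 * S.a f - S.g f F) * S.a f) := by
    have : ∀ i, S.Zb i (S.a f * S.a f) = 2 * S.a f * (S.Db f i + S.Eb f F i
        + (2 * S.a f - S.g f F) * S.Zb i f) := by
      intro i; rw [Derivation.leibniz, S.Zb_a f F]; simp; ring
    simp only [this]
    have ha : (2 * S.a f - S.g f F) * S.a f = (2 * S.a f - S.g f F) * ∑ i, S.Z i f * S.Zb i f := rfl
    rw [ha]
    simp only [ip, p, mul_sum, ← sum_add_distrib]
    exact sum_congr rfl fun i _ => by ring
  rw [this]; ring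

lemma divF2 (hF : ∀ i, S.Zb i F = K * F * S.Zb i f)
    (heq : ∑ i, S.Zb i (S.Z i f) = - (n : A) * S.g f F) :
    S.dv (fun i => F * F * S.p f i) = 2 * K * F ^ 2 * S.a f - n * F ^ 2 * S.g f F := by
  rw [S.dv_mul, S.divp f F heq]
  have : ip (fun i => S.Zb i (F * F)) (S.p f) = 2 * K * F ^ 2 * S.a f := by
    simp only [ip, p, a, mul_sum]
    refine sum_congr rfl fun i _ => ?_
    rw [Derivation.leibniz, hF]; simp; ring
  rw [this]; ring
end HData

/-- Smooth complex valued functions on the Heisenberg group. -/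
def SF (n : ℕ) : Subalgebra ℂ (Heis n → ℂ) where
  carrier := {f | ContDiff ℝ (⊤ : ℕ∞) f}
  mul_mem' := by
    intro a b ha hb; exact ContDiff.mul (𝕜 := ℝ) (n := (⊤ : ℕ∞)) ha hb
  add_mem' := by
    intro a b ha hb; exact ContDiff.add (𝕜 := ℝ) (n := (⊤ : ℕ∞)) ha hb
  algebraMap_mem' := by
    intro r; exact contDiff_const (𝕜 := ℝ) (n := (⊤ : ℕ∞)) (c := r)

namespace SF
variable {n : ℕ}

lemma smth (f : SF n) : ContDiff ℝ (⊤ : ℕ∞) f.1 := f.2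
lemma diffAt (f : SF n) (q : Heis n) : DifferentiableAt ℝ f.1 q :=
  ((smth f).differentiable (by simp)).differentiableAt

/-- Constant coefficient derivative. -/
def pd (v : Heis n) : Derivation ℂ (SF n) (SF n) :=
  Derivation.mk'
    { toFun := fun f => ⟨fun q => fderiv ℝ f.1 q v,
        ((smth f).fderiv_right (m := (⊤ : ℕ∞)) (by simp)).clm_apply contDiff_const⟩
      map_add' := by
        intro x y
        apply Subtype.ext; funext q
        change fderiv ℝ (x.1 + y.1) q v = fderiv ℝ x.1 q v + fderiv ℝ y.1 q v
        rw [fderiv_add (diffAt x q) (diffAt y q)]; rfl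
      map_smul' := by
        intro c x
        apply Subtype.ext; funext q
        change fderiv ℝ (c • x.1) q v = c • fderiv ℝ x.1 q v
        rw [fderiv_const_smul (diffAt x q)]; rfl }
    (by
      intro x y
      apply Subtype.ext; funext q
      change fderiv ℝ (x.1 * y.1) q v = x.1 q * fderiv ℝ y.1 q v + y.1 q * fderiv ℝ x.1 q v
      rw [fderiv_mul (diffAt x q) (diffAt y q)]; simp)

lemma pd_apply (v : Heis n) (f : SF n) (q : Heis n) : (pd v f).1 q = fderiv ℝ f.1 q v := rfl

lemma pd_comm (v w : Heis n) (f : SF n) : pd v (pd w f) = pd w (pd v f) := by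
  apply Subtype.ext; funext q
  have key : ∀ v w : Heis n, (pd v (pd w f)).1 q = fderiv ℝ (fderiv ℝ f.1) q v w := by
    intro v w
    rw [pd_apply]
    have hd : DifferentiableAt ℝ (fderiv ℝ f.1) q :=
      (((smth f).fderiv_right (m := (⊤ : ℕ∞)) (by simp)).differentiable (by simp)).differentiableAt
    change fderiv ℝ (fun q => fderiv ℝ f.1 q w) q v = _
    rw [fderiv_clm_apply hd (differentiableAt_const w)]
    simp
  rw [key, key]
  exact ((smth f).contDiffAt.isSymmSndFDerivAt (by
    rw [minSmoothness_of_isRCLikeNormedField]; exact WithTop.coe_le_coe.2 (le_top : (2 : ℕ∞) ≤ ⊤))) v w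

/-- Coordinates. -/
def zc (j : Fin n) : SF n := ⟨fun q => q.1 j, by
  change ContDiff ℝ (⊤ : ℕ∞) (fun q : Heis n => q.1 j); fun_prop⟩
def zcb (j : Fin n) : SF n := ⟨fun q => (starRingEnd ℂ) (q.1 j), by
  have h : ContDiff ℝ (⊤ : ℕ∞) (fun q : Heis n => q.1 j) := by fun_prop
  exact Complex.conjCLE.contDiff.comp h⟩

def ex (j : Fin n) : Heis n := (Pi.single j 1, 0)
def ey (j : Fin n) : Heis n := (Pi.single j I, 0)
def et : Heis n := (0, 1)

/-- conjugation -/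
def cc : SF n →+* SF n where
  toFun := fun f => ⟨fun q => (starRingEnd ℂ) (f.1 q), Complex.conjCLE.contDiff.comp (smth f)⟩
  map_one' := by apply Subtype.ext; funext q; exact map_one (starRingEnd ℂ)
  map_zero' := by apply Subtype.ext; funext q; exact map_zero (starRingEnd ℂ)
  map_mul' x y := by apply Subtype.ext; funext q; exact map_mul (starRingEnd ℂ) _ _
  map_add' x y := by apply Subtype.ext; funext q; exact map_add (starRingEnd ℂ) _ _

lemma cc_apply (f : SF n) (q : Heis n) : (cc f).1 q = (starRingEnd ℂ) (f.1 q) := rfl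

lemma pd_cc (v : Heis n) (f : SF n) : pd v (cc f) = cc (pd v f) := by
  apply Subtype.ext; funext q
  rw [cc_apply, pd_apply, pd_apply]
  change fderiv ℝ (Complex.conjCLE ∘ f.1) q v = _
  rw [Complex.conjCLE.comp_fderiv]; rfl

lemma cc_zc (j : Fin n) : cc (zc j) = zcb j := rfl

lemma zc_fderiv (j : Fin n) (q v : Heis n) : fderiv ℝ (zc j).1 q v = v.1 j := by
  have : HasFDerivAt (zc j).1 ((ContinuousLinearMap.proj (R := ℝ) (φ := fun _ : Fin n => ℂ) j).comp
    (ContinuousLinearMap.fst ℝ (Fin n → ℂ) ℝ)) q :=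
      ((ContinuousLinearMap.proj (R := ℝ) (φ := fun _ : Fin n => ℂ) j).comp
    (ContinuousLinearMap.fst ℝ (Fin n → ℂ) ℝ)).hasFDerivAt
  rw [this.fderiv]; rfl

/-- constants -/
def cst (c : ℂ) : SF n := algebraMap ℂ (SF n) c
lemma cst_apply (c : ℂ) (q : Heis n) : (cst c : SF n).1 q = c := rfl
lemma der_cst (V : Derivation ℂ (SF n) (SF n)) (c : ℂ) : V (cst c) = 0 := V.map_algebraMap c

lemma pd_zc (v : Heis n) (j : Fin n) : pd v (zc j) = cst (v.1 j) := by
  apply Subtype.ext; funext q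
  rw [pd_apply, zc_fderiv]; rfl

lemma pd_zcb (v : Heis n) (j : Fin n) : pd v (zcb j) = cst ((starRingEnd ℂ) (v.1 j)) := by
  rw [← cc_zc, pd_cc, pd_zc]; rfl

def Zd (j : Fin n) : Derivation ℂ (SF n) (SF n) :=
  (cst (1/2) : SF n) • (pd (ex j) - (cst I : SF n) • pd (ey j)) + (cst I * zcb j) • pd et
def Zbd (j : Fin n) : Derivation ℂ (SF n) (SF n) :=
  (cst (1/2) : SF n) • (pd (ex j) + (cst I : SF n) • pd (ey j)) - (cst I * zc j) • pd et

lemma Zd_apply (j : Fin n) (x : SF n) : Zd j x =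
  cst (1/2) * (pd (ex j) x - cst I * pd (ey j) x) + cst I * zcb j * pd et x := rfl
lemma Zbd_apply (j : Fin n) (x : SF n) : Zbd j x =
  cst (1/2) * (pd (ex j) x + cst I * pd (ey j) x) - cst I * zc j * pd et x := rfl

lemma II : (cst I * cst I : SF n) = -1 := by
  apply Subtype.ext; funext q; exact I_mul_I
lemma half2 : (2 * cst (1/2) : SF n) = 1 := by
  apply Subtype.ext; funext q
  change (2 : ℂ) * (1/2) = 1; norm_num
lemma cst0 : (cst 0 : SF n) = 0 := map_zero _
lemma cst1 : (cst 1 : SF n) = 1 := map_one _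
lemma cstneg (c : ℂ) : (cst (-c) : SF n) = - cst c := map_neg _ _

lemma pd_ex_zc (i j : Fin n) : pd (ex i) (zc j) = if i = j then 1 else 0 := by
  rw [pd_zc]; unfold ex; by_cases h : i = j
  · subst h; simp [cst1]
  · simp [h, Pi.single_apply, Ne.symm h, cst0, eq_comm]
lemma pd_ey_zc (i j : Fin n) : pd (ey i) (zc j) = if i = j then cst I else 0 := by
  rw [pd_zc]; unfold ey; by_cases h : i = j
  · subst h; simp
  · simp [h, Pi.single_apply, Ne.symm h, cst0, eq_comm]
lemma pd_et_zc (j : Fin n) : pd et (zc j) = 0 := by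
  rw [pd_zc]; exact cst0
lemma pd_ex_zcb (i j : Fin n) : pd (ex i) (zcb j) = if i = j then 1 else 0 := by
  rw [pd_zcb]; unfold ex; by_cases h : i = j
  · subst h; simp [cst1]
  · simp [h, Pi.single_apply, Ne.symm h, cst0, eq_comm]
lemma pd_ey_zcb (i j : Fin n) : pd (ey i) (zcb j) = if i = j then - cst I else 0 := by
  rw [pd_zcb]; unfold ey; by_cases h : i = j
  · subst h; simp [cstneg]
  · simp [h, Pi.single_apply, Ne.symm h, cst0, eq_comm]
lemma pd_et_zcb (j : Fin n) : pd et (zcb j) = 0 := by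
  rw [pd_zcb]; unfold et; simp [cst0]

lemma cc_cst (c : ℂ) : cc (cst c : SF n) = cst ((starRingEnd ℂ) c) := rfl

lemma cc_Z (j : Fin n) (x : SF n) : cc (Zd j x) = Zbd j (cc x) := by
  rw [Zd_apply, Zbd_apply]
  have h1 : cc (zcb j : SF n) = zc j := by
    apply Subtype.ext; funext q; exact Complex.conj_conj _
  simp only [map_add, map_mul, map_sub, cc_cst, pd_cc, h1, conj_I, cstneg]
  have : (starRingEnd ℂ) (1/2 : ℂ) = 1/2 := by
    rw [map_div₀, map_one]; congr 1; exact Complex.conj_ofNat 2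
  rw [this]; ring

lemma ZZ_comm (i j : Fin n) (x : SF n) : Zd i (Zd j x) = Zd j (Zd i x) := by
  simp only [Zd_apply, map_add, map_sub, Derivation.leibniz, der_cst, smul_eq_mul,
    pd_ex_zcb, pd_ey_zcb, pd_et_zcb, mul_zero, add_zero, zero_add]
  rw [pd_comm (ex i) (ex j), pd_comm (ex i) (ey j), pd_comm (ey i) (ex j), pd_comm (ey i) (ey j),
    pd_comm et (ex i), pd_comm et (ex j), pd_comm et (ey i), pd_comm et (ey j)]
  by_cases h : i = j
  · subst h; ring
  · simp only [h, Ne.symm h, if_false]; ring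

lemma ZbZb_comm (i j : Fin n) (x : SF n) : Zbd i (Zbd j x) = Zbd j (Zbd i x) := by
  simp only [Zbd_apply, map_add, map_sub, Derivation.leibniz, der_cst, smul_eq_mul,
    pd_ex_zc, pd_ey_zc, pd_et_zc, mul_zero, add_zero, zero_add]
  rw [pd_comm (ex i) (ex j), pd_comm (ex i) (ey j), pd_comm (ey i) (ex j), pd_comm (ey i) (ey j),
    pd_comm et (ex i), pd_comm et (ex j), pd_comm et (ey i), pd_comm et (ey j)]
  by_cases h : i = j
  · subst h; ring
  · simp only [h, Ne.symm h, if_false]; ring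

lemma ZbZ_comm (i j : Fin n) (x : SF n) : Zbd i (Zd j x) = Zd j (Zbd i x) +
    if i = j then 2 * cst I * pd et x else 0 := by
  simp only [Zbd_apply, Zd_apply, map_add, map_sub, Derivation.leibniz, der_cst, smul_eq_mul,
    pd_ex_zc, pd_ey_zc, pd_et_zc, pd_ex_zcb, pd_ey_zcb, pd_et_zcb, mul_zero, add_zero, zero_add]
  rw [pd_comm (ex i) (ex j), pd_comm (ex i) (ey j), pd_comm (ey i) (ex j), pd_comm (ey i) (ey j),
    pd_comm et (ex i), pd_comm et (ex j), pd_comm et (ey i), pd_comm et (ey j)]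
  by_cases h : i = j
  · subst h; simp only [if_true]
    linear_combination (-2 * cst (1/2) * cst I * pd et x) * II (n := n)
     + (2 * cst I * pd et x) * half2 (n := n)
  · simp only [h, Ne.symm h, if_false]; ring

def HS (n : ℕ) : HData n (SF n) where
  Z := Zd
  Zb := Zbd
  T := pd et
  J := cst I
  hJ := II
  ZJ := fun _ => der_cst _ _
  ZbJ := fun _ => der_cst _ _
  TJ := der_cst _ _
  ZZ := ZZ_comm
  ZbZb := ZbZb_comm
  ZbZ := ZbZ_comm
  ZT := by
    intro i x
    simp only [Zd_apply, map_add, map_sub, Derivation.leibniz, der_cst, smul_eq_mul, pd_et_zcb,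
      pd_comm et (ex i), pd_comm et (ey i)]
    ring
  ZbT := by
    intro i x
    simp only [Zbd_apply, map_add, map_sub, Derivation.leibniz, der_cst, smul_eq_mul, pd_et_zc,
      pd_comm et (ex i), pd_comm et (ey i)]
    ring
end SF

namespace SF
variable {n : ℕ}

/-- Real smooth functions as elements of `SF n`. -/
def rl (u : Heis n → ℝ) (hu : ContDiff ℝ (⊤ : ℕ∞) u) : SF n :=
  ⟨fun q => (u q : ℂ), Complex.ofRealCLM.contDiff.comp hu⟩

lemma rl_apply (u : Heis n → ℝ) (hu) (q : Heis n) : (rl u hu).1 q = (u q : ℂ) := rfl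

lemma cc_rl (u : Heis n → ℝ) (hu) : cc (rl u hu) = rl u hu := by
  apply Subtype.ext; funext q; exact Complex.conj_ofReal _

lemma smooth_dv {u : Heis n → ℝ} (hu : ContDiff ℝ (⊤ : ℕ∞) u) (v : Heis n) :
    ContDiff ℝ (⊤ : ℕ∞) (fun q => fderiv ℝ u q v) :=
  (hu.fderiv_right (m := (⊤ : ℕ∞)) (by simp)).clm_apply contDiff_const

lemma pd_rl_apply (v : Heis n) (u : Heis n → ℝ) (hu) (q : Heis n) :
    (pd v (rl u hu)).1 q = ((fderiv ℝ u q v : ℝ) : ℂ) := by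
  rw [pd_apply]
  change fderiv ℝ (Complex.ofRealCLM ∘ u) q v = _
  rw [fderiv_comp q Complex.ofRealCLM.differentiableAt (hu.differentiable (by simp) q)]
  simp

lemma XVec_eq (j : Fin n) (q : Heis n) : XVec j q = ex j + (2 * (q.1 j).im) • et := by
  simp [XVec, ex, et]
lemma YVec_eq (j : Fin n) (q : Heis n) : YVec j q = ey j + (-2 * (q.1 j).re) • et := by
  simp [YVec, ey, et]

lemma smooth_X {u : Heis n → ℝ} (hu : ContDiff ℝ (⊤ : ℕ∞) u) (j : Fin n) :
    ContDiff ℝ (⊤ : ℕ∞) (Xop j u) := by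
  have h : ContDiff ℝ (⊤ : ℕ∞) (fun q : Heis n => (2 * (q.1 j).im)) := by
    have h1 : ContDiff ℝ (⊤ : ℕ∞) (fun q : Heis n => q.1 j) := by fun_prop
    exact contDiff_const.mul (Complex.imCLM.contDiff.comp h1)
  have : Xop j u = fun q => fderiv ℝ u q (ex j) + (2 * (q.1 j).im) * fderiv ℝ u q et := by
    funext q; simp only [Xop, XVec_eq, map_add, map_smul, smul_eq_mul]
  rw [this]
  exact (smooth_dv hu _).add (h.mul (smooth_dv hu _))

lemma smooth_Y {u : Heis n → ℝ} (hu : ContDiff ℝ (⊤ : ℕ∞) u) (j : Fin n) :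
    ContDiff ℝ (⊤ : ℕ∞) (Yop j u) := by
  have h : ContDiff ℝ (⊤ : ℕ∞) (fun q : Heis n => (-2 * (q.1 j).re)) := by
    have h1 : ContDiff ℝ (⊤ : ℕ∞) (fun q : Heis n => q.1 j) := by fun_prop
    exact contDiff_const.mul (Complex.reCLM.contDiff.comp h1)
  have : Yop j u = fun q => fderiv ℝ u q (ey j) + (-2 * (q.1 j).re) * fderiv ℝ u q et := by
    funext q; simp only [Yop, YVec_eq, map_add, map_smul, smul_eq_mul]
  rw [this]
  exact (smooth_dv hu _).add (h.mul (smooth_dv hu _))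

lemma coe_add' (x y : SF n) (q : Heis n) : (x + y).1 q = x.1 q + y.1 q := rfl
lemma coe_sub' (x y : SF n) (q : Heis n) : (x - y).1 q = x.1 q - y.1 q := rfl
lemma coe_mul' (x y : SF n) (q : Heis n) : (x * y).1 q = x.1 q * y.1 q := rfl

/-- evaluation -/
def ev (q : Heis n) : SF n →+* ℂ := (Pi.evalRingHom (fun _ : Heis n => ℂ) q).comp (SF n).val.toRingHom
lemma ev_apply (q : Heis n) (x : SF n) : ev q x = x.1 q := rfl

lemma rlX (u : Heis n → ℝ) (hu) (j : Fin n) :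
    rl (Xop j u) (smooth_X hu j) = Zd j (rl u hu) + Zbd j (rl u hu) := by
  apply Subtype.ext; funext q
  rw [Zd_apply, Zbd_apply]
  simp only [coe_add', coe_sub', coe_mul', pd_rl_apply, cst_apply, rl_apply, Xop, XVec_eq, map_add,
    map_smul, smul_eq_mul]
  apply Complex.ext <;> simp [zc, zcb] <;> ring

lemma rlY (u : Heis n → ℝ) (hu) (j : Fin n) :
    rl (Yop j u) (smooth_Y hu j) = cst I * (Zd j (rl u hu) - Zbd j (rl u hu)) := by
  apply Subtype.ext; funext q
  rw [Zd_apply, Zbd_apply]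
  simp only [coe_add', coe_sub', coe_mul', pd_rl_apply, cst_apply, rl_apply, Yop, YVec_eq, map_add,
    map_smul, smul_eq_mul]
  apply Complex.ext <;> simp [zc, zcb] <;> ring

lemma smooth_L {u : Heis n → ℝ} (hu : ContDiff ℝ (⊤ : ℕ∞) u) :
    ContDiff ℝ (⊤ : ℕ∞) (subLap u) := by
  unfold subLap
  exact ContDiff.sum fun j _ => (smooth_X (smooth_X hu j) j).add (smooth_Y (smooth_Y hu j) j)

lemma rlL (u : Heis n → ℝ) (hu) :
    rl (subLap u) (smooth_L hu) = 4 * ∑ j, Zbd j (Zd j (rl u hu)) - 4 * (n : SF n) * cst I * pd et (rl u hu) := by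
  have h1 : rl (subLap u) (smooth_L hu) = ∑ j, (rl (Xop j (Xop j u)) (smooth_X (smooth_X hu j) j)
      + rl (Yop j (Yop j u)) (smooth_Y (smooth_Y hu j) j)) := by
    apply Subtype.ext; funext q
    rw [← ev_apply q, ← ev_apply q, map_sum]
    simp only [map_add]
    simp [ev_apply, rl_apply, subLap]
  have h2 : ∀ j, (rl (Xop j (Xop j u)) (smooth_X (smooth_X hu j) j)
      + rl (Yop j (Yop j u)) (smooth_Y (smooth_Y hu j) j)) =
      4 * Zbd j (Zd j (rl u hu)) - 4 * cst I * pd et (rl u hu) := by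
    intro j
    rw [rlX _ (smooth_X hu j), rlY _ (smooth_Y hu j), rlX _ hu, rlY _ hu]
    simp only [map_add, map_sub, Derivation.leibniz, der_cst, smul_eq_mul]
    have := ZbZ_comm j j (rl u hu)
    simp only [if_true] at this
    linear_combination (Zd j (Zd j (rl u hu)) - Zd j (Zbd j (rl u hu)) - Zbd j (Zd j (rl u hu))
      + Zbd j (Zbd j (rl u hu))) * II (n := n) - 2 * this
  rw [h1, Finset.sum_congr rfl fun j _ => h2 j, Finset.sum_sub_distrib, Finset.mul_sum]
  simp; ring

lemma pd_comp (v : Heis n) (u : Heis n → ℝ) (hu) (φ φ' : ℝ → ℝ) (hφ : ContDiff ℝ (⊤ : ℕ∞) (fun q => φ (u q)))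
    (hφ' : ContDiff ℝ (⊤ : ℕ∞) (fun q => φ' (u q)))
    (hd : ∀ q, HasDerivAt φ (φ' (u q)) (u q)) :
    pd v (rl (fun q => φ (u q)) hφ) = rl (fun q => φ' (u q)) hφ' * pd v (rl u hu) := by
  apply Subtype.ext; funext q
  rw [coe_mul', pd_rl_apply, pd_rl_apply, rl_apply]
  have h := (hd q).comp_hasFDerivAt q (hu.differentiable (by simp) q).hasFDerivAt
  rw [show (fun q => φ (u q)) = φ ∘ u from rfl, h.fderiv]
  simp

lemma Zd_of_pd {x y c : SF n} (h : ∀ v, pd v x = c * pd v y) (j : Fin n) : Zd j x = c * Zd j y := by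
  rw [Zd_apply, Zd_apply, h, h, h]; ring
lemma Zbd_of_pd {x y c : SF n} (h : ∀ v, pd v x = c * pd v y) (j : Fin n) : Zbd j x = c * Zbd j y := by
  rw [Zbd_apply, Zbd_apply, h, h, h]; ring

/-- The logarithmic potential. -/
structure Pot (n : ℕ) (p : ℝ) where
  u : Heis n → ℝ
  hu : ContDiff ℝ (⊤ : ℕ∞) u
  pos : ∀ q, 0 < u q
  eqn : ∀ q, -subLap u q = u q ^ p

namespace Pot
variable {p : ℝ} (P : Pot n p)

lemma hpow (s : ℝ) : ContDiff ℝ (⊤ : ℕ∞) (fun q => P.u q ^ s) :=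
  P.hu.rpow_const_of_ne (fun q => (P.pos q).ne')
lemma hlog : ContDiff ℝ (⊤ : ℕ∞) (fun q => Real.log (P.u q) / n) :=
  (P.hu.log (fun q => (P.pos q).ne')).div_const _

def U : SF n := rl P.u P.hu
def f : SF n := rl (fun q => Real.log (P.u q) / n) P.hlog
def pw (s : ℝ) : SF n := rl (fun q => P.u q ^ s) (P.hpow s)
def F : SF n := cst ((1 / (4 * n ^ 2) : ℝ) : ℂ) * P.pw (p - 1)

lemma pw_apply (s : ℝ) (q : Heis n) : (P.pw s).1 q = ((P.u q ^ s : ℝ) : ℂ) := rfl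
lemma U_apply (q : Heis n) : P.U.1 q = ((P.u q : ℝ) : ℂ) := rfl

lemma pd_f (hn : 1 ≤ n) (v : Heis n) : pd v P.U = (n * P.U) * pd v P.f := by
  have h : pd v P.f = rl (fun q => (P.u q)⁻¹ / n)
      ((P.hu.inv (fun q => (P.pos q).ne')).div_const _) * pd v P.U := by
    exact pd_comp v P.u P.hu (fun x => Real.log x / n) (fun x => x⁻¹ / n) P.hlog _
      (fun q => (Real.hasDerivAt_log (P.pos q).ne').div_const _)
  rw [h, ← mul_assoc]
  have : (n * P.U) * rl (fun q => (P.u q)⁻¹ / n)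
      ((P.hu.inv (fun q => (P.pos q).ne')).div_const _) = 1 := by
    apply Subtype.ext; funext q
    change ((n : ℂ) * (P.u q : ℂ)) * (((P.u q)⁻¹ / n : ℝ) : ℂ) = 1
    have h1 : (P.u q : ℂ) ≠ 0 := by exact_mod_cast (P.pos q).ne'
    have h2 : (n : ℂ) ≠ 0 := by exact_mod_cast (by omega : n ≠ 0)
    push_cast
    field_simp
  rw [this, one_mul]

lemma pd_pw (hn : 1 ≤ n) (s : ℝ) (v : Heis n) :
    pd v (P.pw s) = (cst ((n * s : ℝ) : ℂ) * P.pw s) * pd v P.f := by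
  have h : pd v (P.pw s) = rl (fun q => s * P.u q ^ (s - 1))
      (contDiff_const.mul (P.hpow (s - 1))) * pd v P.U := by
    exact pd_comp v P.u P.hu (fun x => x ^ s) (fun x => s * x ^ (s - 1)) (P.hpow s) _
      (fun q => Real.hasDerivAt_rpow_const (Or.inl (P.pos q).ne'))
  rw [h, P.pd_f hn, ← mul_assoc]
  congr 1
  apply Subtype.ext; funext q
  change ((s * P.u q ^ (s - 1) : ℝ) : ℂ) * ((n : ℂ) * (P.u q : ℂ)) = ((n * s : ℝ) : ℂ) * ((P.u q ^ s : ℝ) : ℂ)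
  rw [Real.rpow_sub_one (P.pos q).ne']
  have h1 : (P.u q : ℂ) ≠ 0 := by exact_mod_cast (P.pos q).ne'
  push_cast
  field_simp

lemma pd_F (hn : 1 ≤ n) (v : Heis n) :
    pd v P.F = (cst ((n * (p - 1) : ℝ) : ℂ) * P.F) * pd v P.f := by
  rw [F, Derivation.leibniz, der_cst, P.pd_pw hn]
  simp only [smul_eq_mul]; ring

lemma main_eq (hn : 1 ≤ n) :
    ∑ i, (HS n).Zb i ((HS n).Z i P.f) = - (n : SF n) * (HS n).g P.f P.F := by
  change ∑ i, Zbd i (Zd i P.f) = _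
  have h1 : rl (subLap P.u) (smooth_L P.hu) = - P.pw p := by
    apply Subtype.ext; funext q
    change ((subLap P.u q : ℝ) : ℂ) = - ((P.u q ^ p : ℝ) : ℂ)
    rw [← P.eqn q]; push_cast; ring
  rw [rlL] at h1
  change 4 * ∑ j, Zbd j (Zd j P.U) - 4 * (n : SF n) * cst I * pd et P.U = _ at h1
  have hZ : ∀ j, Zd j P.U = (n * P.U) * Zd j P.f := Zd_of_pd (P.pd_f hn)
  have hZb : ∀ j, Zbd j P.U = (n * P.U) * Zbd j P.f := Zbd_of_pd (P.pd_f hn)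
  have h2 : ∑ j, Zbd j (Zd j P.U) = n * P.U * (∑ j, Zbd j (Zd j P.f) + n * (HS n).a P.f) := by
    have : (HS n).a P.f = ∑ j, Zd j P.f * Zbd j P.f := rfl
    rw [this, Finset.mul_sum, ← Finset.sum_add_distrib, Finset.mul_sum]
    refine Finset.sum_congr rfl fun j _ => ?_
    rw [hZ, mul_assoc, HData.nat_leib, Derivation.leibniz, hZb]
    simp only [smul_eq_mul]; ring
  rw [h2, P.pd_f hn] at h1
  have h3 : (HS n).g P.f P.F = (HS n).a P.f + P.F - cst I * pd et P.f := rfl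
  rw [h3]
  have h4 : P.pw p = 4 * n ^ 2 * P.U * P.F := by
    apply Subtype.ext; funext q
    change ((P.u q ^ p : ℝ) : ℂ) = 4 * (n : ℂ) ^ 2 * (P.u q : ℂ) * (((1 / (4 * n ^ 2) : ℝ) : ℂ) * ((P.u q ^ (p - 1) : ℝ) : ℂ))
    rw [Real.rpow_sub_one (P.pos q).ne']
    have h1 : (P.u q : ℂ) ≠ 0 := by exact_mod_cast (P.pos q).ne'
    have h2 : (n : ℂ) ≠ 0 := by exact_mod_cast (by omega : n ≠ 0)
    push_cast
    field_simp
  rw [h4] at h1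
  apply Subtype.ext; funext q
  have h5 := congrArg (ev q) h1
  rw [← ev_apply q, ← ev_apply q]
  simp only [map_neg, map_mul, map_add, map_sub, map_pow, map_natCast, map_ofNat] at h5 ⊢
  have h1 : ev q P.U ≠ 0 := by
    change (P.u q : ℂ) ≠ 0
    exact_mod_cast (P.pos q).ne'
  have h2 : (n : ℂ) ≠ 0 := by exact_mod_cast (by omega : n ≠ 0)
  have h6 : (4 * (n : ℂ) * ev q P.U) ≠ 0 := mul_ne_zero (mul_ne_zero (by norm_num) h2) h1
  apply mul_left_cancel₀ h6
  linear_combination h5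
end Pot
end SF

namespace Sc

lemma young (K ε : ℝ) (hK : 0 ≤ K) (hε : 0 < ε) : ∃ C : ℝ, 0 ≤ C ∧ ∀ α F r : ℝ, 0 ≤ α → 0 ≤ F → 0 ≤ r →
    K * (r * (α ^ 5 + F ^ 2 * α) + r ^ 2 * (α ^ 4 + F ^ 2 + α ^ 2 * F) + r ^ 4 * α ^ 2) ≤
      ε * (α ^ 6 + F ^ 3) + C * r ^ 6 := by
  obtain ⟨κ, hκ0, hκ1, hκ⟩ : ∃ κ : ℝ, 0 < κ ∧ κ ≤ 1 ∧ 6 * K * κ ≤ ε := by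
    refine ⟨min 1 (ε / (6 * K + 1)), by positivity, min_le_left _ _, ?_⟩
    have : min 1 (ε / (6 * K + 1)) ≤ ε / (6 * K + 1) := min_le_right _ _
    calc 6 * K * min 1 (ε / (6 * K + 1)) ≤ 6 * K * (ε / (6 * K + 1)) := by gcongr
      _ ≤ ε := by
        rw [mul_div_assoc', div_le_iff₀ (by positivity)]; nlinarith
  refine ⟨6 * K * (1 / κ) ^ 5, by positivity, ?_⟩
  intro α F r hα hF hr
  obtain ⟨β, hβ, rfl⟩ : ∃ β : ℝ, 0 ≤ β ∧ F = β ^ 2 := ⟨√F, Real.sqrt_nonneg _, (Real.sq_sqrt hF).symm⟩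
  obtain ⟨M, hM, h1, h2, h3⟩ : ∃ M : ℝ, 0 ≤ M ∧ α ≤ M ∧ β ≤ M ∧ M ^ 6 ≤ α ^ 6 + (β ^ 2) ^ 3 := by
    rcases le_total α β with h | h
    · exact ⟨β, hβ, h, le_rfl, by have : 0 ≤ α ^ 6 := by positivity
                                  nlinarith⟩
    · exact ⟨α, hα, le_rfl, h, by have : 0 ≤ (β ^ 2) ^ 3 := by positivity
                                  nlinarith⟩
  have step : K * (r * (α ^ 5 + (β ^ 2) ^ 2 * α) + r ^ 2 * (α ^ 4 + (β ^ 2) ^ 2 + α ^ 2 * β ^ 2) + r ^ 4 * α ^ 2)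
      ≤ K * (r * (M ^ 5 + (M ^ 2) ^ 2 * M) + r ^ 2 * (M ^ 4 + (M ^ 2) ^ 2 + M ^ 2 * M ^ 2) + r ^ 4 * M ^ 2) := by
    gcongr
  refine step.trans ?_
  have hs : K * (r * (M ^ 5 + (M ^ 2) ^ 2 * M) + r ^ 2 * (M ^ 4 + (M ^ 2) ^ 2 + M ^ 2 * M ^ 2) + r ^ 4 * M ^ 2)
    = K * (2 * r * M ^ 5 + 3 * r ^ 2 * M ^ 4 + r ^ 4 * M ^ 2) := by ring
  rw [hs]
  rcases le_total r (κ * M) with h | h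
  · have e1 : r * M ^ 5 ≤ κ * M ^ 6 := by
      calc r * M ^ 5 ≤ κ * M * M ^ 5 := by gcongr
        _ = _ := by ring
    have hrM : r ≤ M := h.trans (by nlinarith)
    have e2 : r ^ 2 * M ^ 4 ≤ κ * M ^ 6 := by
      calc r ^ 2 * M ^ 4 = r * r * M ^ 4 := by ring
        _ ≤ κ * M * M * M ^ 4 := by gcongr
        _ = _ := by ring
    have e3 : r ^ 4 * M ^ 2 ≤ κ * M ^ 6 := by
      calc r ^ 4 * M ^ 2 = r * r ^ 3 * M ^ 2 := by ring
        _ ≤ κ * M * M ^ 3 * M ^ 2 := by gcongr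
        _ = _ := by ring
    calc K * (2 * r * M ^ 5 + 3 * r ^ 2 * M ^ 4 + r ^ 4 * M ^ 2) ≤ K * (6 * (κ * M ^ 6)) := by
          gcongr; linarith
      _ = 6 * K * κ * M ^ 6 := by ring
      _ ≤ ε * M ^ 6 := by gcongr
      _ ≤ ε * (α ^ 6 + (β ^ 2) ^ 3) := by gcongr
      _ ≤ _ := by
        have : 0 ≤ 6 * K * (1 / κ) ^ 5 * r ^ 6 := by positivity
        linarith
  · have hM' : M ≤ 1 / κ * r := by
      rw [div_mul_eq_mul_div, one_mul, le_div_iff₀ hκ0]; linarith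
    have hk : 1 ≤ 1 / κ := by rw [le_div_iff₀ hκ0]; linarith
    have hr1 : r ≤ 1 / κ * r := by nlinarith
    set m := 1 / κ
    have e1 : r * M ^ 5 ≤ m ^ 5 * r ^ 6 := by
      calc r * M ^ 5 ≤ r * (m * r) ^ 5 := by gcongr
        _ = _ := by ring
    have e2 : r ^ 2 * M ^ 4 ≤ m ^ 5 * r ^ 6 := by
      calc r ^ 2 * M ^ 4 = r * r * M ^ 4 := by ring
        _ ≤ r * (m * r) * (m * r) ^ 4 := by gcongr
        _ = _ := by ring
    have e3 : r ^ 4 * M ^ 2 ≤ m ^ 5 * r ^ 6 := by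
      calc r ^ 4 * M ^ 2 = r * r ^ 3 * M ^ 2 := by ring
        _ ≤ r * (m * r) ^ 3 * (m * r) ^ 2 := by gcongr
        _ = _ := by ring
    have h0 : 0 ≤ ε * (α ^ 6 + (β ^ 2) ^ 3) := by positivity
    calc K * (2 * r * M ^ 5 + 3 * r ^ 2 * M ^ 4 + r ^ 4 * M ^ 2) ≤ K * (6 * (m ^ 5 * r ^ 6)) := by
          gcongr; linarith
      _ ≤ _ := by linarith

lemma ymul (x y ε : ℝ) (hε : 0 < ε) : x * y ≤ ε / 8 * y ^ 2 + 2 / ε * x ^ 2 := by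
  have h : ε / 8 * y ^ 2 + 2 / ε * x ^ 2 - x * y = (ε * y - 4 * x) ^ 2 / (8 * ε) := by
    field_simp; ring
  have : 0 ≤ (ε * y - 4 * x) ^ 2 / (8 * ε) := by positivity
  linarith

lemma cutoff (δ s : ℝ) (hδ : 0 < δ) (hs : 0 ≤ s) : ∃ Λ C : ℝ, 0 ≤ Λ ∧ 0 ≤ C ∧
    ∀ α F t D E G r : ℝ, 0 ≤ α → 0 ≤ F → 0 ≤ t → 0 ≤ D → 0 ≤ E → 0 ≤ G → 0 ≤ r →
    δ / 4 * F ^ 3 - C * r ^ 6 ≤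
    δ / 2 * (D ^ 2 + E ^ 2 + G ^ 2 + α ^ 6 + F ^ 3)
     - s * r * ((α ^ 2 + F + 2 * t) * (D + E) + 3 * t * G + δ * (α ^ 4 + F ^ 2) * α)
     - Λ * r ^ 2 * (α ^ 2 * (α ^ 2 + F) + G * α - t ^ 2) - Λ * s * r ^ 3 * t * α := by
  set Λ := 132 * s ^ 2 / δ with hΛ
  have hΛ0 : 0 ≤ Λ := by positivity
  set K := s * δ + 12 * s ^ 2 / δ + Λ + 2 * Λ ^ 2 / δ + Λ * s ^ 2 / 2 with hK
  have hK0 : 0 ≤ K := by positivity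
  obtain ⟨C, hC, h⟩ := young K (δ / 4) hK0 (by positivity)
  refine ⟨Λ, C, hΛ0, hC, ?_⟩
  intro α F t D E G r hα hF ht hD hE hG hr
  have h := h α F r hα hF hr
  have i1 := ymul (s * r * (α ^ 2 + F + 2 * t)) D δ hδ
  have i2 := ymul (s * r * (α ^ 2 + F + 2 * t)) E δ hδ
  have i3 := ymul (3 * s * r * t) G δ hδ
  have i4 := ymul (Λ * r ^ 2 * α) G δ hδ
  have i5 : (α ^ 2 + F + 2 * t) ^ 2 ≤ 3 * (α ^ 4 + F ^ 2 + 4 * t ^ 2) := by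
    nlinarith [sq_nonneg (α ^ 2 - F), sq_nonneg (α ^ 2 - 2 * t), sq_nonneg (F - 2 * t)]
  have i6 : 4 * s ^ 2 / δ * r ^ 2 * (α ^ 2 + F + 2 * t) ^ 2 ≤
      4 * s ^ 2 / δ * r ^ 2 * (3 * (α ^ 4 + F ^ 2 + 4 * t ^ 2)) := by gcongr
  have i7 : Λ * s * r ^ 3 * t * α ≤ Λ / 2 * (r ^ 2 * t ^ 2) + Λ * s ^ 2 / 2 * (r ^ 4 * α ^ 2) := by
    have : 0 ≤ Λ * (r * t - s * r ^ 2 * α) ^ 2 := by positivity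
    have e0 : Λ / 2 * (r ^ 2 * t ^ 2) + Λ * s ^ 2 / 2 * (r ^ 4 * α ^ 2) - Λ * s * r ^ 3 * t * α
      = Λ * (r * t - s * r ^ 2 * α) ^ 2 / 2 := by ring
    linarith
  have i8 : Λ / 2 * (r ^ 2 * t ^ 2) = 66 * (s ^ 2 / δ) * (r ^ 2 * t ^ 2) := by rw [hΛ]; ring
  have k1 : 0 ≤ r * (α ^ 5 + F ^ 2 * α) := by positivity
  have k2 : 0 ≤ r ^ 2 * (α ^ 4 + F ^ 2 + α ^ 2 * F) := by positivity
  have k3 : 0 ≤ r ^ 4 * α ^ 2 := by positivity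
  have c1 : s * δ ≤ K := by
    have : 0 ≤ 12 * s ^ 2 / δ + Λ + 2 * Λ ^ 2 / δ + Λ * s ^ 2 / 2 := by positivity
    linarith
  have c2 : 12 * s ^ 2 / δ + Λ ≤ K := by
    have : 0 ≤ s * δ + 2 * Λ ^ 2 / δ + Λ * s ^ 2 / 2 := by positivity
    linarith
  have c3 : 2 * Λ ^ 2 / δ + Λ * s ^ 2 / 2 ≤ K := by
    have : 0 ≤ s * δ + (12 * s ^ 2 / δ + Λ) := by positivity
    linarith
  have j1 := mul_le_mul_of_nonneg_right c1 k1
  have j2 := mul_le_mul_of_nonneg_right c2 k2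
  have j3 := mul_le_mul_of_nonneg_right c3 k3
  have j4 : Λ * r ^ 2 * (α ^ 2 * (α ^ 2 + F)) + 12 * s ^ 2 / δ * r ^ 2 * (α ^ 4 + F ^ 2) ≤
      (12 * s ^ 2 / δ + Λ) * (r ^ 2 * (α ^ 4 + F ^ 2 + α ^ 2 * F)) := by
    have : 0 ≤ Λ * r ^ 2 * F ^ 2 + 12 * s ^ 2 / δ * r ^ 2 * (α ^ 2 * F) := by positivity
    linarith
  have p1 : 0 ≤ δ * D ^ 2 := by positivity
  have p2 : 0 ≤ δ * E ^ 2 := by positivity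
  have p3 : 0 ≤ δ * G ^ 2 := by positivity
  have p4 : 0 ≤ δ * α ^ 6 := by positivity
  clear_value K Λ
  clear c1 c2 c3 hK hΛ k1 k2 k3 i5 hα hF ht hD hE hG hr hδ hs hC hK0 hΛ0
  ring_nf at *
  linarith

set_option maxHeartbeats 4000000 in
lemma coer (n k a F t d1 e TD TE xDD xEE xGG xDE xGE xGD δ : ℝ) (hn : 1 ≤ n) (hk0 : 0 < k) (hk2 : k < 2)
    (hδ : δ = (2 - k) * k / (4 * (n + 2)))
    (ha : 0 ≤ a) (hF : 0 ≤ F) (hTD : 0 ≤ TD) (hTE : 0 ≤ TE)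
    (h1 : xDD ≤ a * TD) (h2 : xEE ≤ a * TE) (h3 : d1 ^ 2 ≤ a * xDD) (h4 : e ^ 2 ≤ a * xEE)
    (hS : 0 ≤ xDD + xEE + 2 * xDE)
    (h5 : (d1 + e) ^ 2 ≤ a * (xDD + xEE + 2 * xDE))
    (h6 : (xDD + xEE) / 8 + xGG / 2 ≤ 3 * xGG + xDD + xEE + 2 * xGD - 2 * xGE)
    (hGG : 0 ≤ xGG) (hDD : 0 ≤ xDD) (hEE : 0 ≤ xEE) :
    δ / 2 * (xDD + xEE + xGG + a ^ 3 + F ^ 3) ≤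
    ((a + F) * (TE + TD) + xEE + xDD + 3 * xGG + 2 * xDE - 2 * xGE + 2 * xGD
      + (k - 2) * F * (e + d1) - (2 * n - 1) * (k - 2) * F * a * (a + F) - 3 * n * (k - 2) * F * t ^ 2)
    + δ * (n * a ^ 3 - (n + 2) * a ^ 2 * F + 2 * a * (d1 + e))
    - δ * ((2 * n - 2 + 2 * k - n) * F ^ 2 * a - n * F ^ 3) := by
  obtain ⟨τ, hτ⟩ : ∃ τ, τ = 2 - k := ⟨_, rfl⟩
  have hk : k = 2 - τ := by linarith
  subst hk
  have hτ0 : 0 < τ := by linarith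
  have hδ0 : 0 < δ := by rw [hδ]; simp only [sub_sub_cancel]; positivity
  have hδ' : 4 * (δ * (n + 2)) = τ * (2 - τ) := by rw [hδ]; field_simp; ring
  have hδ1 : δ ≤ 1 / 12 := by nlinarith [sq_nonneg (τ - 1)]
  -- the F-part
  have q1 : ∀ x T y : ℝ, 0 ≤ T → y ≤ a * T → x ^ 2 ≤ a * y →
      τ * (2 - τ) / 4 * a ^ 2 ≤ T - τ * x + τ / 2 * a ^ 2 := by
    intro x T y hT hy hx
    obtain ⟨w, hw, rfl⟩ : ∃ w : ℝ, 0 ≤ w ∧ T = w ^ 2 := ⟨√T, Real.sqrt_nonneg _, (Real.sq_sqrt hT).symm⟩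
    have : x ^ 2 ≤ (a * w) ^ 2 := by
      refine hx.trans ?_
      calc a * y ≤ a * (a * w ^ 2) := by gcongr
        _ = _ := by ring
    have hx' : x ≤ a * w := (abs_le_of_sq_le_sq' this (by positivity)).2
    nlinarith [sq_nonneg (w - τ / 2 * a)]
  have q2 := q1 d1 TD xDD hTD h1 h3
  have q3 := q1 e TE xEE hTE h2 h4
  have q4 : F * (τ * (2 - τ) / 2 * a ^ 2) ≤ F * (TD + TE - τ * (d1 + e) + τ * a ^ 2) := by
    apply mul_le_mul_of_nonneg_left _ hF; linarith
  have q5 : 0 ≤ (n - 1) * (τ * F * a ^ 2) := mul_nonneg (by linarith) (by positivity)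
  -- the a^3 part
  have r1 : δ / 2 * a ^ 3 ≤ (xDD + xEE + 2 * xDE) + 2 * δ * a * (d1 + e) + δ * n * a ^ 3 := by
    obtain ⟨w, hw, hw'⟩ : ∃ w : ℝ, 0 ≤ w ∧ (xDD + xEE + 2 * xDE) = w ^ 2 := ⟨√_, Real.sqrt_nonneg _, (Real.sq_sqrt hS).symm⟩
    obtain ⟨α, hα, rfl⟩ : ∃ w : ℝ, 0 ≤ w ∧ a = w ^ 2 := ⟨√a, Real.sqrt_nonneg _, (Real.sq_sqrt ha).symm⟩
    rw [hw'] at h5 ⊢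
    have : (d1 + e) ^ 2 ≤ (α * w) ^ 2 := by rw [mul_pow]; exact h5
    have hx' : -(α * w) ≤ d1 + e := (abs_le_of_sq_le_sq' this (by positivity)).1
    have e1 : 2 * δ * α ^ 2 * (-(α * w)) ≤ 2 * δ * α ^ 2 * (d1 + e) := by gcongr
    have e2 : 0 ≤ (w - δ * α ^ 3) ^ 2 := sq_nonneg _
    have e3 : 0 ≤ α ^ 6 := by positivity
    have e4 : δ ^ 2 * α ^ 6 ≤ δ / 2 * α ^ 6 := by
      apply mul_le_mul_of_nonneg_right _ e3; nlinarith
    have e5 : δ * α ^ 6 ≤ δ * n * α ^ 6 := by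
      apply mul_le_mul_of_nonneg_right _ e3; nlinarith
    have e6 : (w - δ * α ^ 3) ^ 2 = w ^ 2 + 2 * δ * α ^ 2 * (-(α * w)) + δ ^ 2 * α ^ 6 := by ring
    have e7 : (α ^ 2) ^ 3 = α ^ 6 := by ring
    rw [e7]
    linarith
  -- tensor part
  have r2 : xDD + xEE ≤ a * (TE + TD) := by linarith
  have r3 : δ * (n + 2) * a ^ 2 * F = τ * (2 - τ) / 4 * a ^ 2 * F := by
    linear_combination a ^ 2 * F / 4 * hδ'
  have r4 : δ * ((2 * n - 2 + 2 * (2 - τ) - n) * F ^ 2 * a) ≤ (2 * n - 1) * τ * F ^ 2 * a := by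
    have hb : δ * (2 * n - 2 + 2 * (2 - τ) - n) ≤ (2 * n - 1) * τ := by
      have : δ * (2 * n - 2 + 2 * (2 - τ) - n) ≤ δ * (n + 2) := by
        apply mul_le_mul_of_nonneg_left _ hδ0.le; linarith
      have h8 : 0 ≤ τ * τ := by positivity
      have h9 : 1 * τ ≤ (2 * n - 1) * τ := mul_le_mul_of_nonneg_right (by linarith) hτ0.le
      linarith
    calc _ = δ * (2 * n - 2 + 2 * (2 - τ) - n) * (F ^ 2 * a) := by ring
      _ ≤ (2 * n - 1) * τ * (F ^ 2 * a) := by gcongr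
      _ = _ := by ring
  have r5 : δ / 2 * F ^ 3 ≤ δ * n * F ^ 3 := by
    apply mul_le_mul_of_nonneg_right _ (by positivity)
    have : δ * 1 ≤ δ * n := mul_le_mul_of_nonneg_left hn hδ0.le
    linarith
  have r6 : δ / 2 * (xDD + xEE + xGG) ≤ (xDD + xEE) / 8 + xGG / 2 := by
    have : δ / 2 * (xDD + xEE + xGG) ≤ 1 / 24 * (xDD + xEE + xGG) := by
      apply mul_le_mul_of_nonneg_right <;> linarith
    linarith
  have r7 : 0 ≤ 3 * n * τ * F * t ^ 2 := by positivity
  have r8 : 0 ≤ τ * (2 - τ) / 4 * a ^ 2 * F := by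
    have : 0 < 2 - τ := hk0
    positivity
  have id1 : (2 * n - 1) * (2 - τ - 2) * F * a * (a + F) = - (τ * F * a ^ 2) - 2 * ((n - 1) * (τ * F * a ^ 2))
      - (2 * n - 1) * τ * F ^ 2 * a := by ring
  rw [id1]
  linarith
end Sc

namespace SF
open HData Finset
variable {n : ℕ}

lemma cc_cc (x : SF n) : cc (cc x) = x := by
  apply Subtype.ext; funext q; exact Complex.conj_conj _
lemma ev_cc (q : Heis n) (x : SF n) : ev q (cc x) = (starRingEnd ℂ) (ev q x) := rfl
lemma ev_cst (q : Heis n) (c : ℂ) : ev q (cst c) = c := rfl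
lemma ev_J (q : Heis n) : ev q (HS n).J = I := rfl
lemma cc_SZ (i : Fin n) (x : SF n) : cc ((HS n).Z i x) = (HS n).Zb i (cc x) := cc_Z i x
lemma cc_SZb (i : Fin n) (x : SF n) : cc ((HS n).Zb i x) = (HS n).Z i (cc x) := by
  have := cc_SZ i (cc x)
  rw [cc_cc] at this
  rw [← this, cc_cc]
lemma cc_ST (x : SF n) : cc ((HS n).T x) = (HS n).T (cc x) := (pd_cc et x).symm
lemma cc_SJ : cc (HS n).J = - (HS n).J := by
  change cc (cst I) = - cst I
  rw [cc_cst, conj_I, cstneg]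

variable (f F : SF n) (hf : cc f = f) (hF : cc F = F)
include hf
lemma cc_a : cc ((HS n).a f) = (HS n).a f := by
  simp only [a, map_sum, map_mul, cc_SZ, cc_SZb, hf]
  exact sum_congr rfl fun i _ => mul_comm _ _
lemma cc_D2 (i j) : cc ((HS n).D2 f i j) = (HS n).D2b f i j := by
  simp only [D2, D2b, map_sub, map_mul, cc_SZ, hf, map_ofNat]
lemma cc_D (i) : cc ((HS n).D f i) = (HS n).Db f i := by
  simp only [D, Db, map_sum, map_mul, cc_D2 f hf, cc_SZb, hf]
lemma cc_p (i) : cc ((HS n).p f i) = (HS n).pb f i := by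
  simp only [HData.p, pb, cc_SZ, hf]
include hF
lemma cc_b : cc ((HS n).b f F) = (HS n).b f F := by
  simp only [b, map_add, cc_a f hf, hF]
lemma cc_g : cc ((HS n).g f F) = (HS n).gb f F := by
  simp only [g, gb, map_sub, map_mul, cc_b f F hf hF, cc_ST, hf, cc_SJ]; ring
lemma cc_E2 (i j) : cc ((HS n).E2 f F i j) = (HS n).E2 f F j i := by
  simp only [E2, map_add, cc_SZb, cc_SZ, hf]
  rw [(HS n).ZbZ]
  by_cases h : i = j
  · subst h
    simp only [if_true, cc_g f F hf hF]; simp only [g, gb]; ring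
  · simp only [h, Ne.symm h, if_false, map_zero]; ring
lemma cc_E (i) : cc ((HS n).E f F i) = (HS n).Eb f F i := by
  simp only [E, Eb, map_sum, map_mul, cc_E2 f F hf hF, cc_SZ, hf]
lemma cc_G (i) : cc ((HS n).G f F i) = (HS n).Gb f F i := by
  simp only [G, Gb, map_add, map_mul, cc_g f F hf hF, cc_SZ, cc_ST, cc_SJ, hf]; ring
omit hf hF

lemma cc_ip (X Y Xb Yb : Fin n → SF n) (hX : ∀ i, cc (X i) = Xb i) (hY : ∀ i, cc (Y i) = Yb i) :
    cc (ip X Y) = ip Xb Yb := by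
  simp only [ip, map_sum, map_mul, hX, hY]

lemma ip_comm (X Y : Fin n → SF n) : ip X Y = ip Y X := by
  simp only [ip]; exact sum_congr rfl fun i _ => mul_comm _ _

lemma im_zero {q : Heis n} {x : SF n} (h : cc x = x) : ev q x = (((ev q x).re : ℝ) : ℂ) := by
  have := congrArg (ev q) h
  rw [ev_cc] at this
  exact (Complex.conj_eq_iff_re.1 this).symm

/-- Real inner product of the values of two vector fields. -/
def rip (q : Heis n) (X Y : Fin n → SF n) : ℝ := ∑ i, (((starRingEnd ℂ) (ev q (X i))) * ev q (Y i)).re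

lemma ev_ip (q : Heis n) (X Y Xb : Fin n → SF n) (hX : ∀ i, cc (X i) = Xb i) :
    (ev q (ip Xb Y)).re = rip q X Y := by
  simp only [ip, map_sum, map_mul, ← hX, ev_cc, rip, Complex.re_sum]

lemma rip_comm (q : Heis n) (X Y : Fin n → SF n) : rip q X Y = rip q Y X := by
  refine sum_congr rfl fun i _ => ?_
  simp [Complex.mul_re]; ring

end SF

namespace SF
open HData Finset
variable {n : ℕ}

/-- hypotheses on the pair `(f, F)` -/
structure Good (f F : SF n) (k : ℝ) : Prop where
  hf : cc f = f
  hF : cc F = F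
  zF : ∀ i, (HS n).Z i F = cst (k : ℂ) * F * (HS n).Z i f
  zbF : ∀ i, (HS n).Zb i F = cst (k : ℂ) * F * (HS n).Zb i f
  tF : (HS n).T F = cst (k : ℂ) * F * (HS n).T f
  heq : ∑ i, (HS n).Zb i ((HS n).Z i f) = - (n : SF n) * (HS n).g f F

namespace Good
variable {f F : SF n} {k : ℝ} (H : Good f F k) (q : Heis n)

lemma conj_ip {X Y Xb Yb : Fin n → SF n} (hX : ∀ i, cc (X i) = Xb i) (hY : ∀ i, cc (Y i) = Yb i) :
    ev q (ip Xb Yb) = (starRingEnd ℂ) (ev q (ip X Y)) := by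
  rw [← ev_cc, cc_ip X Y Xb Yb hX hY]

include H
lemma cpb (i) : cc ((HS n).pb f i) = (HS n).p f i := by
  rw [← cc_p f H.hf, cc_cc]

lemma e_real : cc (ip ((HS n).E f F) ((HS n).pb f)) = ip ((HS n).E f F) ((HS n).pb f) := by
  rw [cc_ip _ _ _ _ (cc_E f F H.hf H.hF) H.cpb]
  simp only [ip, E, Eb, sum_mul]
  rw [sum_comm]
  refine sum_congr rfl fun i _ => sum_congr rfl fun j _ => ?_
  simp only [HData.p, pb]; ring

lemma TD_real : cc ((HS n).TD f) = (HS n).TD f := by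
  simp only [TD, map_sum, map_mul]
  refine sum_congr rfl fun i _ => sum_congr rfl fun j _ => ?_
  rw [← cc_D2 f H.hf, cc_cc, mul_comm]

lemma TE_real : cc ((HS n).TE f F) = (HS n).TE f F := by
  simp only [TE, map_sum, map_mul]
  refine sum_congr rfl fun i _ => sum_congr rfl fun j _ => ?_
  rw [cc_E2 f F H.hf H.hF, cc_E2 f F H.hf H.hF, mul_comm]

lemma T_real : cc ((HS n).T f) = (HS n).T f := by rw [cc_ST, H.hf]
lemma TT_real : cc ((HS n).T ((HS n).T f)) = (HS n).T ((HS n).T f) := by rw [cc_ST, H.T_real]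

lemma ip_pb_W : ip ((HS n).pb f) ((HS n).W f F) =
    ((HS n).b f F + 2 * (HS n).J * (HS n).T f) * ip ((HS n).E f F) ((HS n).pb f)
    + ((HS n).b f F - 2 * (HS n).J * (HS n).T f) * ip ((HS n).D f) ((HS n).pb f)
    - 3 * (HS n).J * (HS n).T f * ip ((HS n).G f F) ((HS n).pb f) := by
  simp only [ip, W, mul_sum, ← sum_add_distrib, ← sum_sub_distrib]
  exact sum_congr rfl fun i _ => by ring

lemma ev_a : ev q ((HS n).a f) = (((ev q ((HS n).a f)).re : ℝ) : ℂ) := im_zero (cc_a f H.hf)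
lemma ev_F : ev q F = (((ev q F).re : ℝ) : ℂ) := im_zero H.hF
lemma ev_T : ev q ((HS n).T f) = (((ev q ((HS n).T f)).re : ℝ) : ℂ) := im_zero H.T_real

set_option maxHeartbeats 1000000 in
lemma reW : (ev q (cst ((2 * n - 2 : ℝ) : ℂ) * ip ((HS n).pb f) ((HS n).W f F)
      + (HS n).dv ((HS n).W f F))).re =
    ((ev q ((HS n).a f)).re + (ev q F).re) * ((ev q ((HS n).TE f F)).re + (ev q ((HS n).TD f)).re)
    + rip q ((HS n).E f F) ((HS n).E f F) + rip q ((HS n).D f) ((HS n).D f)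
    + 3 * rip q ((HS n).G f F) ((HS n).G f F) + 2 * rip q ((HS n).D f) ((HS n).E f F)
    - 2 * rip q ((HS n).G f F) ((HS n).E f F) + 2 * rip q ((HS n).G f F) ((HS n).D f)
    + (k - 2) * (ev q F).re * ((ev q (ip ((HS n).E f F) ((HS n).pb f))).re
      + (ev q (ip ((HS n).D f) ((HS n).pb f))).re)
    - (2 * n - 1) * (k - 2) * (ev q F).re * (ev q ((HS n).a f)).re
      * ((ev q ((HS n).a f)).re + (ev q F).re)
    - 3 * n * (k - 2) * (ev q F).re * (ev q ((HS n).T f)).re ^ 2 := by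
  rw [H.ip_pb_W, (HS n).divW f F _ H.zbF, (HS n).divE f F _ H.zbF H.heq,
    (HS n).divD f F _ H.zF H.heq, (HS n).divG f F _ H.zbF H.tF H.heq]
  have cD := cc_D f H.hf
  have cE := cc_E f F H.hf H.hF
  have cG := cc_G f F H.hf H.hF
  have x1 := ev_ip q _ ((HS n).E f F) _ cE
  have x2 := ev_ip q _ ((HS n).E f F) _ cD
  have x3 := ev_ip q _ ((HS n).E f F) _ cG
  have x4 := ev_ip q _ ((HS n).D f) _ cD
  have x5 := ev_ip q _ ((HS n).D f) _ cE
  have x6 := ev_ip q _ ((HS n).D f) _ cG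
  have x7 := ev_ip q _ ((HS n).G f F) _ cG
  rw [rip_comm q ((HS n).E f F) ((HS n).D f)] at x5
  rw [← x1, ← x3, ← x4, ← x6, ← x7]
  have x25 := x5.trans x2.symm
  rw [← x2]
  have y1 := conj_ip q cE H.cpb
  have y2 := conj_ip q cD H.cpb
  have y3 := conj_ip q cG H.cpb
  have y4 := im_zero (q := q) H.e_real
  have y5 := im_zero (q := q) H.TD_real
  have y6 := im_zero (q := q) H.TE_real
  have y8 := im_zero (q := q) H.TT_real
  have y9 := H.ev_a q
  have y10 := H.ev_F q
  have y11 := H.ev_T q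
  simp only [map_add, map_sub, map_mul, map_neg, map_natCast, map_ofNat, map_pow, map_one, g, gb, b, ev_J, ev_cst]
  rw [y1, y2, y3, y4, y5, y6, y8, y9, y10, y11]
  set X1 := ev q (ip ((HS n).Eb f F) ((HS n).E f F))
  set X2 := ev q (ip ((HS n).Db f) ((HS n).E f F))
  set X3 := ev q (ip ((HS n).Gb f F) ((HS n).E f F))
  set X4 := ev q (ip ((HS n).Db f) ((HS n).D f))
  set X5 := ev q (ip ((HS n).Eb f F) ((HS n).D f))
  set X6 := ev q (ip ((HS n).Gb f F) ((HS n).D f))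
  set X7 := ev q (ip ((HS n).Gb f F) ((HS n).G f F))
  generalize (ev q (ip ((HS n).E f F) ((HS n).pb f))).re = e
  generalize ev q (ip ((HS n).D f) ((HS n).pb f)) = d
  generalize ev q (ip ((HS n).G f F) ((HS n).pb f)) = γ
  generalize (ev q ((HS n).TD f)).re = TD
  generalize (ev q ((HS n).TE f F)).re = TE
  generalize (ev q ((HS n).T ((HS n).T f))).re = tt
  generalize (ev q ((HS n).a f)).re = a
  generalize (ev q F).re = F'
  generalize (ev q ((HS n).T f)).re = t
  have z5 : X5.re = X2.re := x25
  simp [pow_two, Complex.mul_re, Complex.mul_im]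
  rw [z5]
  ring

lemma rea2 : (ev q (cst ((2 * n - 2 : ℝ) : ℂ) * ip ((HS n).pb f)
      (fun i => (HS n).a f * (HS n).a f * (HS n).p f i)
      + (HS n).dv (fun i => (HS n).a f * (HS n).a f * (HS n).p f i))).re =
    n * (ev q ((HS n).a f)).re ^ 3 - (n + 2) * (ev q ((HS n).a f)).re ^ 2 * (ev q F).re
    + 2 * (ev q ((HS n).a f)).re * ((ev q (ip ((HS n).D f) ((HS n).pb f))).re
      + (ev q (ip ((HS n).E f F) ((HS n).pb f))).re) := by
  have h : ip ((HS n).pb f) (fun i => (HS n).a f * (HS n).a f * (HS n).p f i) = (HS n).a f ^ 3 := by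
    have : (HS n).a f ^ 3 = (HS n).a f * (HS n).a f * ∑ i, (HS n).Z i f * (HS n).Zb i f := by
      change _ = (HS n).a f * (HS n).a f * (HS n).a f; ring
    rw [this]
    simp only [ip, mul_sum, pb, HData.p]
    exact sum_congr rfl fun i _ => by ring
  rw [h, (HS n).diva2 f F H.heq]
  have cD := cc_D f H.hf
  have cE := cc_E f F H.hf H.hF
  have y1 := conj_ip q cE H.cpb
  have y2 := conj_ip q cD H.cpb
  have y9 := H.ev_a q
  have y10 := H.ev_F q
  have y11 := H.ev_T q
  simp only [map_add, map_sub, map_mul, map_neg, map_natCast, map_ofNat, map_pow, map_one, g, gb, b, ev_J, ev_cst]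
  rw [y1, y2, y9, y10, y11]
  simp [pow_succ, Complex.mul_re, Complex.mul_im]
  ring

lemma reF2 : (ev q (cst ((2 * n - 2 : ℝ) : ℂ) * ip ((HS n).pb f)
      (fun i => F * F * (HS n).p f i)
      + (HS n).dv (fun i => F * F * (HS n).p f i))).re =
    (2 * n - 2 + 2 * k - n) * (ev q F).re ^ 2 * (ev q ((HS n).a f)).re - n * (ev q F).re ^ 3 := by
  have h : ip ((HS n).pb f) (fun i => F * F * (HS n).p f i) = F * F * (HS n).a f := by
    change _ = F * F * ∑ i, (HS n).Z i f * (HS n).Zb i f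
    simp only [ip, mul_sum, pb, HData.p]
    exact sum_congr rfl fun i _ => by ring
  rw [h, (HS n).divF2 f F _ H.zbF H.heq]
  have y9 := H.ev_a q
  have y10 := H.ev_F q
  have y11 := H.ev_T q
  simp only [map_add, map_sub, map_mul, map_neg, map_natCast, map_ofNat, map_pow, map_one, g, gb, b, ev_J, ev_cst]
  rw [y9, y10, y11]
  simp [pow_succ, Complex.mul_re, Complex.mul_im]
  ring

lemma reU : (ev q (cst ((2 * n - 2 : ℝ) : ℂ) * ip ((HS n).pb f)
      (fun i => (HS n).J * (HS n).T f * (HS n).p f i)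
      + (HS n).dv (fun i => (HS n).J * (HS n).T f * (HS n).p f i))).re =
    - (ev q (ip ((HS n).G f F) ((HS n).pb f))).re
    + (ev q ((HS n).a f)).re * ((ev q ((HS n).a f)).re + (ev q F).re)
    - n * (ev q ((HS n).T f)).re ^ 2 := by
  have h : ip ((HS n).pb f) (fun i => (HS n).J * (HS n).T f * (HS n).p f i) =
      (HS n).J * (HS n).T f * (HS n).a f := by
    change _ = (HS n).J * (HS n).T f * ∑ i, (HS n).Z i f * (HS n).Zb i f
    simp only [ip, mul_sum, pb, HData.p]
    exact sum_congr rfl fun i _ => by ring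
  rw [h, (HS n).divU f F H.heq]
  have cG := cc_G f F H.hf H.hF
  have y3 := conj_ip q cG H.cpb
  have y9 := H.ev_a q
  have y10 := H.ev_F q
  have y11 := H.ev_T q
  simp only [map_add, map_sub, map_mul, map_neg, map_natCast, map_ofNat, map_pow, map_one, g, gb, b, ev_J, ev_cst]
  rw [y3, y9, y10, y11]
  simp [pow_succ, Complex.mul_re, Complex.mul_im]
  ring
end Good
end SF

namespace SF
open HData Finset
variable {n : ℕ}

lemma cs_sum (x y : Fin n → ℂ) : ‖∑ i, x i * y i‖ ^ 2 ≤ (∑ i, ‖x i‖ ^ 2) * ∑ i, ‖y i‖ ^ 2 := by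
  have h1 : ‖∑ i, x i * y i‖ ≤ ∑ i, ‖x i‖ * ‖y i‖ := by
    refine (norm_sum_le _ _).trans (le_of_eq ?_)
    exact sum_congr rfl fun i _ => norm_mul _ _
  calc ‖∑ i, x i * y i‖ ^ 2 ≤ (∑ i, ‖x i‖ * ‖y i‖) ^ 2 := by gcongr
    _ ≤ _ := sum_mul_sq_le_sq_mul_sq _ _ _

lemma rip_self (q : Heis n) (X : Fin n → SF n) : rip q X X = ∑ i, ‖ev q (X i)‖ ^ 2 := by
  refine sum_congr rfl fun i _ => ?_
  rw [← Complex.normSq_eq_norm_sq, Complex.normSq_apply]; simp [Complex.mul_re]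

lemma rip_nonneg (q : Heis n) (X : Fin n → SF n) : 0 ≤ rip q X X := by
  rw [rip_self]; positivity

lemma ip_le (q : Heis n) (X Y : Fin n → SF n) : ‖ev q (ip X Y)‖ ^ 2 ≤ rip q X X * rip q Y Y := by
  rw [rip_self, rip_self]
  simp only [ip, map_sum, map_mul]
  exact cs_sum _ _

lemma ip_le' (q : Heis n) (X Y : Fin n → SF n) : ‖ev q (ip X Y)‖ ≤ √(rip q X X) * √(rip q Y Y) := by
  rw [← Real.sqrt_mul (rip_nonneg q X)]
  exact Real.le_sqrt_of_sq_le (ip_le q X Y)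

lemma re_sq_le (z : ℂ) : z.re ^ 2 ≤ ‖z‖ ^ 2 := by
  rw [← Complex.normSq_eq_norm_sq, Complex.normSq_apply]; nlinarith [sq_nonneg z.im]

lemma tens_le (q : Heis n) (M : Fin n → Fin n → SF n) (Y : Fin n → SF n) :
    rip q (fun i => ∑ j, M i j * Y j) (fun i => ∑ j, M i j * Y j) ≤
      rip q Y Y * ∑ i, ∑ j, ‖ev q (M i j)‖ ^ 2 := by
  rw [rip_self, rip_self, mul_sum]
  refine sum_le_sum fun i _ => ?_
  simp only [map_sum, map_mul]
  rw [mul_comm]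
  exact cs_sum _ _

lemma rip_add (q : Heis n) (X Y : Fin n → SF n) :
    rip q (fun i => X i + Y i) (fun i => X i + Y i) = rip q X X + rip q Y Y + 2 * rip q X Y := by
  simp only [rip, mul_sum, ← sum_add_distrib]
  refine sum_congr rfl fun i _ => ?_
  simp [Complex.mul_re]; ring

lemma rip_tri (q : Heis n) (D E G : Fin n → SF n) :
    (rip q D D + rip q E E) / 8 + rip q G G / 2 ≤
      3 * rip q G G + rip q D D + rip q E E + 2 * rip q G D - 2 * rip q G E := by
  simp only [rip, mul_sum, sum_div, ← sum_add_distrib, ← sum_sub_distrib]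
  refine sum_le_sum fun i _ => ?_
  simp [Complex.mul_re]
  generalize (ev q (D i)).re = d1
  generalize (ev q (D i)).im = d2
  generalize (ev q (E i)).re = e1
  generalize (ev q (E i)).im = e2
  generalize (ev q (G i)).re = g1
  generalize (ev q (G i)).im = g2
  nlinarith [sq_nonneg (7/8 * d1 + g1), sq_nonneg (7/8 * d2 + g2), sq_nonneg (7/8 * e1 - g1), sq_nonneg (7/8 * e2 - g2),
    sq_nonneg g1, sq_nonneg g2]

namespace Good
variable {f F : SF n} {k : ℝ} (H : Good f F k) (q : Heis n)
include H

lemma a_eq : (ev q ((HS n).a f)).re = rip q ((HS n).p f) ((HS n).p f) := by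
  rw [← ev_ip q _ _ _ (cc_p f H.hf)]
  congr 2
  exact sum_congr rfl fun i _ => mul_comm _ _

lemma pb_eq : rip q ((HS n).pb f) ((HS n).pb f) = rip q ((HS n).p f) ((HS n).p f) := by
  simp only [rip_self, ← cc_p f H.hf, ev_cc, RCLike.norm_conj]

lemma TD_eq : (ev q ((HS n).TD f)).re = ∑ i, ∑ j, ‖ev q ((HS n).D2 f i j)‖ ^ 2 := by
  simp only [TD, map_sum, Complex.re_sum, map_mul, ← cc_D2 f H.hf, ev_cc]
  refine sum_congr rfl fun i _ => sum_congr rfl fun j _ => ?_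
  rw [← Complex.normSq_eq_norm_sq, Complex.normSq_apply]; simp [Complex.mul_re]

lemma TE_eq : (ev q ((HS n).TE f F)).re = ∑ i, ∑ j, ‖ev q ((HS n).E2 f F i j)‖ ^ 2 := by
  simp only [TE, map_sum, Complex.re_sum, map_mul]
  refine sum_congr rfl fun i _ => sum_congr rfl fun j _ => ?_
  rw [← cc_E2 f F H.hf H.hF i j, ev_cc]
  rw [← Complex.normSq_eq_norm_sq, Complex.normSq_apply]; simp [Complex.mul_re]

lemma coercive (hn : 1 ≤ n) (hk0 : 0 < k) (hk2 : k < 2) (δ : ℝ)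
    (hδ : δ = (2 - k) * k / (4 * (n + 2))) (hF0 : 0 ≤ (ev q F).re) :
    δ / 2 * (rip q ((HS n).D f) ((HS n).D f) + rip q ((HS n).E f F) ((HS n).E f F)
      + rip q ((HS n).G f F) ((HS n).G f F) + (ev q ((HS n).a f)).re ^ 3 + (ev q F).re ^ 3) ≤
    (ev q (cst ((2 * n - 2 : ℝ) : ℂ) * ip ((HS n).pb f) ((HS n).W f F)
      + (HS n).dv ((HS n).W f F))).re
    + δ * (ev q (cst ((2 * n - 2 : ℝ) : ℂ) * ip ((HS n).pb f)
      (fun i => (HS n).a f * (HS n).a f * (HS n).p f i)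
      + (HS n).dv (fun i => (HS n).a f * (HS n).a f * (HS n).p f i))).re
    - δ * (ev q (cst ((2 * n - 2 : ℝ) : ℂ) * ip ((HS n).pb f)
      (fun i => F * F * (HS n).p f i)
      + (HS n).dv (fun i => F * F * (HS n).p f i))).re := by
  rw [H.reW, H.rea2, H.reF2]
  have ha := H.a_eq q
  have hpb := H.pb_eq q
  rw [← ha] at hpb
  refine Sc.coer n k _ _ _ _ _ _ _ _ _ _ _ _ _ δ (by exact_mod_cast hn) hk0 hk2 hδ ?_ hF0 ?_ ?_ ?_ ?_ ?_ ?_ ?_ ?_ ?_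
    (rip_nonneg _ _) (rip_nonneg _ _) (rip_nonneg _ _)
  · rw [ha]; exact rip_nonneg _ _
  · rw [H.TD_eq]; positivity
  · rw [H.TE_eq]; positivity
  · rw [H.TD_eq, ← hpb]
    exact tens_le q _ _
  · rw [H.TE_eq, ha]
    exact tens_le q _ _
  · rw [← hpb, mul_comm]
    exact (re_sq_le _).trans (ip_le q _ _)
  · rw [← hpb, mul_comm]
    exact (re_sq_le _).trans (ip_le q _ _)
  · rw [← rip_add]; exact rip_nonneg _ _
  · rw [← hpb, mul_comm, ← rip_add, ← Complex.add_re, ← map_add]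
    refine le_trans (le_of_eq ?_) ((re_sq_le _).trans (ip_le q (fun i => (HS n).D f i + (HS n).E f F i) _))
    congr 3
    simp only [ip, ← sum_add_distrib]
    exact sum_congr rfl fun i _ => by ring
  · exact rip_tri q _ _ _

end Good

/-- The test vector field. -/
def tvf (f F e η : SF n) (σ : ℕ) (δ Λ : ℝ) (i : Fin n) : SF n :=
  e * (η ^ (σ + 6) * (HS n).W f F i)
  + e * ((cst (δ : ℂ) * η ^ (σ + 6)) * ((HS n).a f * (HS n).a f * (HS n).p f i))
  - e * ((cst (δ : ℂ) * η ^ (σ + 6)) * (F * F * (HS n).p f i))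
  - e * ((cst (Λ : ℂ) * η ^ (σ + 4)) * ((HS n).J * (HS n).T f * (HS n).p f i))

lemma Zb_pow (i : Fin n) (η : SF n) (s : ℕ) : (HS n).Zb i (η ^ (s + 1)) =
    ((s + 1 : ℕ) : SF n) * η ^ s * (HS n).Zb i η := by
  rw [Derivation.leibniz_pow]; simp [mul_assoc]

lemma ip_Zb_pow (c : ℂ) (η : SF n) (s : ℕ) (X : Fin n → SF n) :
    ip (fun i => (HS n).Zb i (cst c * η ^ (s + 1))) X =
    cst c * ((s + 1 : ℕ) : SF n) * η ^ s * ip (fun i => (HS n).Zb i η) X := by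
  simp only [ip, mul_sum]
  refine sum_congr rfl fun i _ => ?_
  rw [Derivation.leibniz, Zb_pow, der_cst]; simp; ring

end SF

namespace SF
open HData Finset
variable {n : ℕ}

lemma dv_piece (f e η : SF n) (m c : ℂ) (s : ℕ) (he : ∀ i, (HS n).Zb i e = cst m * e * (HS n).Zb i f)
    (X : Fin n → SF n) :
    (HS n).dv (fun i => e * ((cst c * η ^ (s + 1)) * X i)) =
    e * (cst c * (η ^ (s + 1) * (cst m * ip ((HS n).pb f) X + (HS n).dv X)
      + ((s + 1 : ℕ) : SF n) * η ^ s * ip (fun i => (HS n).Zb i η) X)) := by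
  rw [(HS n).dv_exp f e (cst m) _ he, ip_Zb_pow]; ring

lemma re_piece (q : Heis n) (e η A B : SF n) (c eu h : ℝ) (s : ℕ) (hE : ev q e = (eu : ℂ))
    (hη : ev q η = (h : ℂ)) :
    (ev q (e * (cst (c : ℂ) * (η ^ (s + 1) * A + ((s + 1 : ℕ) : SF n) * η ^ s * B)))).re =
    eu * (c * (h ^ (s + 1) * (ev q A).re + (s + 1) * h ^ s * (ev q B).re)) := by
  simp only [map_mul, map_add, map_pow, hE, hη, map_natCast, ev_cst]
  have h1 : (h : ℂ) ^ (s + 1) = ((h ^ (s + 1) : ℝ) : ℂ) := by push_cast; rfl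
  have h2 : ((s + 1 : ℕ) : ℂ) * (h : ℂ) ^ s = (((s + 1) * h ^ s : ℝ) : ℂ) := by push_cast; rfl
  rw [h1, h2]
  simp only [Complex.re_ofReal_mul, Complex.add_re]

lemma tvf_re (q : Heis n) (f F e η : SF n) (m : ℂ) (σ : ℕ) (δ Λ eu h : ℝ)
    (he : ∀ i, (HS n).Zb i e = cst m * e * (HS n).Zb i f) (hE : ev q e = (eu : ℂ))
    (hη : ev q η = (h : ℂ)) :
    (ev q ((HS n).dv (tvf f F e η σ δ Λ))).re = eu * (
      (h ^ (σ + 6) * (ev q (cst m * ip ((HS n).pb f) ((HS n).W f F) + (HS n).dv ((HS n).W f F))).re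
        + (σ + 6) * h ^ (σ + 5) * (ev q (ip (fun i => (HS n).Zb i η) ((HS n).W f F))).re)
      + δ * (h ^ (σ + 6) * (ev q (cst m * ip ((HS n).pb f)
      (fun i => (HS n).a f * (HS n).a f * (HS n).p f i)
      + (HS n).dv (fun i => (HS n).a f * (HS n).a f * (HS n).p f i))).re
        + (σ + 6) * h ^ (σ + 5) * (ev q (ip (fun i => (HS n).Zb i η) (fun i => (HS n).a f * (HS n).a f * (HS n).p f i))).re)
      - δ * (h ^ (σ + 6) * (ev q (cst m * ip ((HS n).pb f)
      (fun i => F * F * (HS n).p f i)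
      + (HS n).dv (fun i => F * F * (HS n).p f i))).re
        + (σ + 6) * h ^ (σ + 5) * (ev q (ip (fun i => (HS n).Zb i η) (fun i => F * F * (HS n).p f i))).re)
      - Λ * (h ^ (σ + 4) * (ev q (cst m * ip ((HS n).pb f)
      (fun i => (HS n).J * (HS n).T f * (HS n).p f i)
      + (HS n).dv (fun i => (HS n).J * (HS n).T f * (HS n).p f i))).re
        + (σ + 4) * h ^ (σ + 3) * (ev q (ip (fun i => (HS n).Zb i η) (fun i => (HS n).J * (HS n).T f * (HS n).p f i))).re)) := by
  have h1 : (HS n).dv (tvf f F e η σ δ Λ) =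
     (HS n).dv (fun i => e * ((cst ((1 : ℝ) : ℂ) * η ^ ((σ + 5) + 1)) * (HS n).W f F i))
     + (HS n).dv (fun i => e * ((cst (δ : ℂ) * η ^ ((σ + 5) + 1)) * ((HS n).a f * (HS n).a f * (HS n).p f i)))
     - (HS n).dv (fun i => e * ((cst (δ : ℂ) * η ^ ((σ + 5) + 1)) * (F * F * (HS n).p f i)))
     - (HS n).dv (fun i => e * ((cst (Λ : ℂ) * η ^ ((σ + 3) + 1)) * ((HS n).J * (HS n).T f * (HS n).p f i))) := by
    rw [← (HS n).dv_add, ← (HS n).dv_sub, ← (HS n).dv_sub]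
    congr 1; funext i
    have : (cst ((1 : ℝ) : ℂ) : SF n) = 1 := by rw [Complex.ofReal_one, cst1]
    rw [this, one_mul]; rfl
  rw [h1, dv_piece f e η m _ _ he, dv_piece f e η m _ _ he, dv_piece f e η m _ _ he, dv_piece f e η m _ _ he]
  rw [map_sub, map_sub, map_add, Complex.sub_re, Complex.sub_re, Complex.add_re,
    re_piece q _ _ _ _ _ eu h _ hE hη, re_piece q _ _ _ _ _ eu h _ hE hη,
    re_piece q _ _ _ _ _ eu h _ hE hη, re_piece q _ _ _ _ _ eu h _ hE hη]
  push_cast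
  ring

lemma neg_le_re {z : ℂ} {B : ℝ} (h : ‖z‖ ≤ B) : -B ≤ z.re := by
  have := (abs_le.1 ((Complex.abs_re_le_norm z).trans h)).1
  exact this

namespace Good
variable {f F : SF n} {k : ℝ} (H : Good f F k) (q : Heis n)
include H

lemma ipW_bound (ω : Fin n → SF n) (r : ℝ) (hr : √(rip q ω ω) ≤ r) (hF0 : 0 ≤ (ev q F).re) :
    ‖ev q (ip ω ((HS n).W f F))‖ ≤
    r * (((ev q ((HS n).a f)).re + (ev q F).re + 2 * |(ev q ((HS n).T f)).re|) *
      (√(rip q ((HS n).D f) ((HS n).D f)) + √(rip q ((HS n).E f F) ((HS n).E f F)))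
      + 3 * |(ev q ((HS n).T f)).re| * √(rip q ((HS n).G f F) ((HS n).G f F))) := by
  have h1 : ip ω ((HS n).W f F) =
    ((HS n).b f F + 2 * (HS n).J * (HS n).T f) * ip ω ((HS n).E f F)
    + ((HS n).b f F - 2 * (HS n).J * (HS n).T f) * ip ω ((HS n).D f)
    - 3 * (HS n).J * (HS n).T f * ip ω ((HS n).G f F) := by
    simp only [ip, W, mul_sum, ← sum_add_distrib, ← sum_sub_distrib]
    exact sum_congr rfl fun i _ => by ring
  have ha0 : 0 ≤ (ev q ((HS n).a f)).re := by rw [H.a_eq]; exact rip_nonneg _ _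
  have y9 := H.ev_a q
  have y10 := H.ev_F q
  have y11 := H.ev_T q
  rw [h1]
  simp only [map_add, map_sub, map_mul, map_ofNat, b, ev_J]
  rw [y9, y10, y11]
  have iE := ip_le' q ω ((HS n).E f F)
  have iD := ip_le' q ω ((HS n).D f)
  have iG := ip_le' q ω ((HS n).G f F)
  revert iE iD iG ha0 hF0
  simp only [Complex.ofReal_re]
  generalize (ev q ((HS n).a f)).re = a
  generalize (ev q F).re = F'
  generalize (ev q ((HS n).T f)).re = t
  generalize ev q (ip ω ((HS n).E f F)) = xE
  generalize ev q (ip ω ((HS n).D f)) = xD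
  generalize ev q (ip ω ((HS n).G f F)) = xG
  have nE := Real.sqrt_nonneg (rip q ((HS n).E f F) ((HS n).E f F))
  have nD := Real.sqrt_nonneg (rip q ((HS n).D f) ((HS n).D f))
  have nG := Real.sqrt_nonneg (rip q ((HS n).G f F) ((HS n).G f F))
  revert nE nD nG
  generalize √(rip q ((HS n).E f F) ((HS n).E f F)) = E
  generalize √(rip q ((HS n).D f) ((HS n).D f)) = D
  generalize √(rip q ((HS n).G f F) ((HS n).G f F)) = G
  intro nE nD nG hF0 ha0 iE iD iG
  have hb : ‖(a : ℂ) + (F' : ℂ)‖ = a + F' := by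
    rw [← Complex.ofReal_add, Complex.norm_real, Real.norm_of_nonneg (by positivity)]
  have ht : ‖(2 : ℂ) * I * (t : ℂ)‖ = 2 * |t| := by simp
  have ht3 : ‖(3 : ℂ) * I * (t : ℂ)‖ = 3 * |t| := by simp
  have c1 : ‖(a : ℂ) + (F' : ℂ) + 2 * I * (t : ℂ)‖ ≤ a + F' + 2 * |t| := by
    refine (norm_add_le _ _).trans ?_; rw [hb, ht]
  have c2 : ‖(a : ℂ) + (F' : ℂ) - 2 * I * (t : ℂ)‖ ≤ a + F' + 2 * |t| := by
    refine (norm_sub_le _ _).trans ?_; rw [hb, ht]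
  have iE' : ‖xE‖ ≤ r * E := iE.trans (by gcongr)
  have iD' : ‖xD‖ ≤ r * D := iD.trans (by gcongr)
  have iG' : ‖xG‖ ≤ r * G := iG.trans (by gcongr)
  refine (norm_sub_le _ _).trans ?_
  refine (add_le_add (norm_add_le _ _) le_rfl).trans ?_
  rw [norm_mul, norm_mul, norm_mul, ht3]
  have hbt : 0 ≤ a + F' + 2 * |t| := by positivity
  calc _ ≤ (a + F' + 2 * |t|) * (r * E) + (a + F' + 2 * |t|) * (r * D) + 3 * |t| * (r * G) := by
        gcongr
    _ = _ := by ring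

lemma ipp_bound (ω : Fin n → SF n) (r : ℝ) (hr : √(rip q ω ω) ≤ r) (x : SF n) :
    ‖ev q (ip ω (fun i => x * (HS n).p f i))‖ ≤ r * (‖ev q x‖ * √((ev q ((HS n).a f)).re)) := by
  have h1 : ip ω (fun i => x * (HS n).p f i) = x * ip ω ((HS n).p f) := by
    simp only [ip, mul_sum]
    exact sum_congr rfl fun i _ => by ring
  rw [h1, map_mul, norm_mul, H.a_eq]
  have := (ip_le' q ω ((HS n).p f)).trans (mul_le_mul_of_nonneg_right hr (Real.sqrt_nonneg _))
  calc _ ≤ ‖ev q x‖ * (r * √(rip q ((HS n).p f) ((HS n).p f))) := by gcongr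
    _ = _ := by ring
end Good
end SF

namespace Sc
lemma assemble (δ s Λ C : ℝ) (hδ : 0 < δ) (hs : 2 ≤ s) (hΛ : 0 ≤ Λ)
    (hcut : ∀ α F t D E G r : ℝ, 0 ≤ α → 0 ≤ F → 0 ≤ t → 0 ≤ D → 0 ≤ E → 0 ≤ G → 0 ≤ r →
    δ / 4 * F ^ 3 - C * r ^ 6 ≤
    δ / 2 * (D ^ 2 + E ^ 2 + G ^ 2 + α ^ 6 + F ^ 3)
     - s * r * ((α ^ 2 + F + 2 * t) * (D + E) + 3 * t * G + δ * (α ^ 4 + F ^ 2) * α)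
     - Λ * r ^ 2 * (α ^ 2 * (α ^ 2 + F) + G * α - t ^ 2) - Λ * s * r ^ 3 * t * α)
    (α F t D E G r h A B K w pa pF U pU : ℝ) (hα : 0 ≤ α) (hF : 0 ≤ F) (ht : 0 ≤ t) (hD : 0 ≤ D)
    (hE : 0 ≤ E) (hG : 0 ≤ G) (hr : 0 ≤ r) (hh : 0 ≤ h)
    (hA : δ / 2 * (D ^ 2 + E ^ 2 + G ^ 2 + α ^ 6 + F ^ 3) ≤ A + δ * B - δ * K)
    (hw : -(r * ((α ^ 2 + F + 2 * t) * (D + E) + 3 * t * G)) ≤ w)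
    (hpa : -(r * (α ^ 4 * α)) ≤ pa) (hpF : pF ≤ r * (F ^ 2 * α))
    (hU : U ≤ G * α + α ^ 2 * (α ^ 2 + F) - t ^ 2) (hpU : pU ≤ r * (t * α)) :
    δ / 4 * (h ^ 2 * F) ^ 3 - C * r ^ 6 ≤ h ^ 6 * (A + δ * B - δ * K) + s * h ^ 5 * (w + δ * pa - δ * pF)
      - Λ * r ^ 2 * (h ^ 4 * U + (s - 2) * h ^ 3 * pU) := by
  have c := hcut (h * α) (h ^ 2 * F) (h ^ 2 * t) (h ^ 3 * D) (h ^ 3 * E) (h ^ 3 * G) r (by positivity)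
    (by positivity) (by positivity) (by positivity) (by positivity) (by positivity) hr
  refine c.trans ?_
  have k1 := mul_le_mul_of_nonneg_left hA (by positivity : 0 ≤ h ^ 6)
  have hs0 : 0 ≤ s := by linarith
  have k2 : s * h ^ 5 * (-(r * ((α ^ 2 + F + 2 * t) * (D + E) + 3 * t * G)) + δ * -(r * (α ^ 4 * α))
      - δ * (r * (F ^ 2 * α))) ≤ s * h ^ 5 * (w + δ * pa - δ * pF) := by
    gcongr
  have hs2 : 0 ≤ s - 2 := by linarith
  have k4 : (s - 2) * h ^ 3 * pU ≤ s * h ^ 3 * (r * (t * α)) := by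
    calc (s - 2) * h ^ 3 * pU ≤ (s - 2) * h ^ 3 * (r * (t * α)) := by gcongr
      _ ≤ s * h ^ 3 * (r * (t * α)) := by gcongr; linarith
  have k3 : Λ * r ^ 2 * (h ^ 4 * U + (s - 2) * h ^ 3 * pU) ≤ Λ * r ^ 2 * (h ^ 4 *
      (G * α + α ^ 2 * (α ^ 2 + F) - t ^ 2) + s * h ^ 3 * (r * (t * α))) := by
    gcongr
  clear hcut c hA hw hpa hpF hU hpU k4
  ring_nf at *
  linarith
end Sc

namespace SF
open HData Finset
variable {n : ℕ}

lemma pointwise (hn : 1 ≤ n) (k : ℝ) (hk0 : 0 < k) (hk2 : k < 2) (σ : ℕ) :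
    ∃ δ Λ C : ℝ, 0 < δ ∧ 0 ≤ Λ ∧ 0 ≤ C ∧ ∀ (f F e η : SF n), Good f F k →
    (∀ i, (HS n).Zb i e = cst ((2 * n - 2 : ℝ) : ℂ) * e * (HS n).Zb i f) →
    ∀ (q : Heis n) (r eu h : ℝ), 0 ≤ (ev q F).re → 0 ≤ eu → 0 ≤ h → 0 ≤ r → ev q e = (eu : ℂ) →
      ev q η = (h : ℂ) → √(rip q (fun i => (HS n).Zb i η) (fun i => (HS n).Zb i η)) ≤ r →
      eu * (h ^ σ * (δ / 4 * (h ^ 2 * (ev q F).re) ^ 3 - C * r ^ 6)) ≤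
        (ev q ((HS n).dv (tvf f F e η σ δ (Λ * r ^ 2)))).re := by
  obtain ⟨δ, hδ⟩ : ∃ δ : ℝ, δ = (2 - k) * k / (4 * (n + 2)) := ⟨_, rfl⟩
  have hδ0 : 0 < δ := by
    rw [hδ]; have : 0 < 2 - k := by linarith
    positivity
  obtain ⟨Λ, C, hΛ, hC, hcut⟩ := Sc.cutoff δ (σ + 6) hδ0 (by positivity)
  refine ⟨δ, Λ, C, hδ0, hΛ, hC, ?_⟩
  intro f F e η H he q r eu h hF0 heu hh hr hE hη hω
  rw [tvf_re q f F e η _ σ δ (Λ * r ^ 2) eu h he hE hη]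
  refine mul_le_mul_of_nonneg_left ?_ heu
  have ha0 : 0 ≤ (ev q ((HS n).a f)).re := by rw [H.a_eq]; exact rip_nonneg _ _
  have hA := H.coercive q hn hk0 hk2 δ hδ hF0
  have hw := neg_le_re (H.ipW_bound q _ r hω hF0)
  have hpa := neg_le_re (H.ipp_bound q _ r hω ((HS n).a f * (HS n).a f))
  have hpF := (Complex.re_le_norm _).trans (H.ipp_bound q _ r hω (F * F))
  have hpU := neg_le_re (z := -(ev q (ip (fun i => (HS n).Zb i η) (fun i => (HS n).J * (HS n).T f * (HS n).p f i))))
    (B := r * (|(ev q ((HS n).T f)).re| * √(ev q ((HS n).a f)).re)) (by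
      rw [norm_neg]
      refine (H.ipp_bound q _ r hω ((HS n).J * (HS n).T f)).trans (le_of_eq ?_)
      rw [map_mul, ev_J, H.ev_T q]; simp)
  have hU := H.reU q
  have hγ := neg_le_re (ip_le' q ((HS n).G f F) ((HS n).pb f))
  rw [H.pb_eq q, ← H.a_eq q] at hγ
  have na : ‖ev q ((HS n).a f * (HS n).a f)‖ = (ev q ((HS n).a f)).re ^ 2 := by
    rw [map_mul, H.ev_a q, norm_mul, Complex.norm_real, Real.norm_of_nonneg ha0]; simp; ring
  have nF : ‖ev q (F * F)‖ = (ev q F).re ^ 2 := by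
    rw [map_mul, H.ev_F q, norm_mul, Complex.norm_real, Real.norm_of_nonneg hF0]; simp; ring
  rw [na] at hpa
  rw [nF] at hpF
  rw [Complex.neg_re] at hpU
  obtain ⟨α, hα⟩ : ∃ α, α = √(ev q ((HS n).a f)).re := ⟨_, rfl⟩
  have hα0 : 0 ≤ α := by rw [hα]; exact Real.sqrt_nonneg _
  have haα : (ev q ((HS n).a f)).re = α ^ 2 := by rw [hα, Real.sq_sqrt ha0]
  have sD := Real.sq_sqrt (rip_nonneg q ((HS n).D f))
  have sE := Real.sq_sqrt (rip_nonneg q ((HS n).E f F))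
  have sG := Real.sq_sqrt (rip_nonneg q ((HS n).G f F))
  rw [← hα] at hpa hpF hpU hγ
  rw [haα] at hpa hw hU hA
  rw [← sD, ← sE, ← sG] at hA
  have hs2 : (2 : ℝ) ≤ (σ : ℝ) + 6 := by
    have : (0 : ℝ) ≤ σ := by positivity
    linarith
  have key := Sc.assemble δ (σ + 6) Λ C hδ0 hs2 hΛ hcut α _ _ _ _ _ r h
    _ _ _ _ _ _ hα0 hF0
    (abs_nonneg (ev q ((HS n).T f)).re) (Real.sqrt_nonneg (rip q ((HS n).D f) ((HS n).D f)))
    (Real.sqrt_nonneg (rip q ((HS n).E f F) ((HS n).E f F)))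
    (Real.sqrt_nonneg (rip q ((HS n).G f F) ((HS n).G f F))) hr hh
    (hA.trans' (le_of_eq (by ring))) hw (hpa.trans' (le_of_eq (by ring))) hpF
    (U := (ev q (cst ((2 * n - 2 : ℝ) : ℂ) * ip ((HS n).pb f)
      (fun i => (HS n).J * (HS n).T f * (HS n).p f i)
      + (HS n).dv (fun i => (HS n).J * (HS n).T f * (HS n).p f i))).re) (by
        rw [hU, sq_abs]
        have hn' : (1 : ℝ) ≤ n := by exact_mod_cast hn
        have : 1 * (ev q ((HS n).T f)).re ^ 2 ≤ n * (ev q ((HS n).T f)).re ^ 2 := by gcongr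
        linarith) (pU := (ev q (ip (fun i => (HS n).Zb i η) (fun i => (HS n).J * (HS n).T f * (HS n).p f i))).re)
        (by linarith)
  have := mul_le_mul_of_nonneg_left key (by positivity : 0 ≤ h ^ σ)
  refine this.trans (le_of_eq ?_)
  simp only [pow_add]
  ring
end SF

namespace Sc
lemma absorb (δ C μ A : ℝ) (hδ : 0 < δ) (hC : 0 ≤ C) (hμ : 0 ≤ μ) (hA : 0 ≤ A) (m σ : ℕ)
    (hm : (m : ℝ) ≤ 2 * μ) (hσ : 2 * μ ≤ σ) (hσ1 : 1 ≤ σ) :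
    ∃ C' : ℝ, 0 ≤ C' ∧ ∀ F h r : ℝ, 0 ≤ F → 0 ≤ h → h ≤ 1 → 0 ≤ r → r ≤ 1 →
      δ / 8 * (A * F ^ μ * F ^ 3) * h ^ (σ + 6) - (if h = 0 then 0 else C' * r ^ (6 + m)) ≤
      A * F ^ μ * (h ^ σ * (δ / 4 * (h ^ 2 * F) ^ 3 - C * r ^ 6)) := by
  obtain ⟨κ, hκ0, hκ⟩ : ∃ κ : ℝ, 0 ≤ κ ∧ κ ^ 3 = 8 * C / δ := by
    refine ⟨(8 * C / δ) ^ ((1 : ℝ) / 3), by positivity, ?_⟩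
    rw [← Real.rpow_natCast, ← Real.rpow_mul (by positivity)]; norm_num
  refine ⟨C * A * κ ^ μ, by positivity, ?_⟩
  intro F h r hF hh hh1 hr hr1
  split_ifs with h0
  · subst h0
    rw [zero_pow (by omega), zero_pow (by omega)]; simp
  have hh' : 0 < h := lt_of_le_of_ne hh (Ne.symm h0)
  suffices hs : A * F ^ μ * (h ^ σ * (C * r ^ 6)) ≤
      δ / 8 * (A * F ^ μ * F ^ 3) * h ^ (σ + 6) + C * A * κ ^ μ * r ^ (6 + m) by
    have e : A * F ^ μ * (h ^ σ * (δ / 4 * (h ^ 2 * F) ^ 3 - C * r ^ 6)) =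
      2 * (δ / 8 * (A * F ^ μ * F ^ 3) * h ^ (σ + 6)) - A * F ^ μ * (h ^ σ * (C * r ^ 6)) := by
      rw [pow_add]; ring
    linarith
  have hFμ : 0 ≤ F ^ μ := Real.rpow_nonneg hF _
  by_cases hc : C * r ^ 6 ≤ δ / 8 * (h ^ 2 * F) ^ 3
  · have h1 : A * F ^ μ * (h ^ σ * (C * r ^ 6)) ≤ A * F ^ μ * (h ^ σ * (δ / 8 * (h ^ 2 * F) ^ 3)) := by
      gcongr
    have h2 : 0 ≤ C * A * κ ^ μ * r ^ (6 + m) := by positivity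
    refine h1.trans (le_trans (le_of_eq ?_) (le_add_of_nonneg_right h2))
    rw [pow_add]; ring
  · push Not at hc
    have h1 : (h ^ 2 * F) ^ 3 ≤ (κ * r ^ 2) ^ 3 := by
      rw [mul_pow κ, hκ]
      have : (h ^ 2 * F) ^ 3 * (δ / 8) ≤ C * r ^ 6 := by linarith
      have := (le_div_iff₀ (by positivity)).2 this
      refine this.trans (le_of_eq ?_)
      field_simp
    have h2 : h ^ 2 * F ≤ κ * r ^ 2 := le_of_pow_le_pow_left₀ (by norm_num) (by positivity) h1
    have h3 : h ^ σ * F ^ μ ≤ κ ^ μ * r ^ m := by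
      calc h ^ σ * F ^ μ ≤ (h ^ 2) ^ μ * F ^ μ := by
            gcongr
            rw [← Real.rpow_natCast h σ, ← Real.rpow_natCast h 2, ← Real.rpow_mul hh]
            exact Real.rpow_le_rpow_of_exponent_ge hh' hh1 (by simpa using hσ)
        _ = (h ^ 2 * F) ^ μ := (Real.mul_rpow (by positivity) hF).symm
        _ ≤ (κ * r ^ 2) ^ μ := Real.rpow_le_rpow (by positivity) h2 hμ
        _ = κ ^ μ * (r ^ 2) ^ μ := Real.mul_rpow hκ0 (by positivity)
        _ ≤ κ ^ μ * r ^ m := by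
            gcongr
            rcases eq_or_lt_of_le hr with h | h
            · subst h
              rcases eq_or_lt_of_le hμ with h | h
              · subst h
                have : m = 0 := by
                  have : (m : ℝ) ≤ 0 := by simpa using hm
                  exact_mod_cast le_antisymm this (by positivity)
                subst this; simp
              · rw [zero_pow (by norm_num), Real.zero_rpow h.ne']; positivity
            · rw [← Real.rpow_natCast r 2, ← Real.rpow_mul hr, ← Real.rpow_natCast r m]
              exact Real.rpow_le_rpow_of_exponent_ge h hr1 (by simpa using hm)
    have h4 : 0 ≤ δ / 8 * (A * F ^ μ * F ^ 3) * h ^ (σ + 6) := by positivity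
    calc A * F ^ μ * (h ^ σ * (C * r ^ 6)) = C * A * r ^ 6 * (h ^ σ * F ^ μ) := by ring
      _ ≤ C * A * r ^ 6 * (κ ^ μ * r ^ m) := by gcongr
      _ = C * A * κ ^ μ * r ^ (6 + m) := by rw [pow_add]; ring
      _ ≤ _ := by linarith
end Sc

namespace SF
variable {n : ℕ}

lemma Pot.good {p : ℝ} (P : Pot n p) (hn : 1 ≤ n) : Good P.f P.F (n * (p - 1)) where
  hf := cc_rl _ _
  hF := by
    rw [Pot.F, map_mul, cc_cst, Complex.conj_ofReal]
    congr 1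
    exact cc_rl _ _
  zF := Zd_of_pd (P.pd_F hn)
  zbF := Zbd_of_pd (P.pd_F hn)
  tF := P.pd_F hn et
  heq := P.main_eq hn

lemma Pot.F_apply {p : ℝ} (P : Pot n p) (q : Heis n) :
    (ev q P.F).re = 1 / (4 * n ^ 2) * P.u q ^ (p - 1) := by
  rw [Pot.F, map_mul, ev_apply, ev_apply, Pot.pw_apply, cst_apply, ← Complex.ofReal_mul, Complex.ofReal_re]

/-- The pointwise lower bound for the divergence of the test field. -/
lemma Pot.lower {p : ℝ} (P : Pot n p) (hn : 1 ≤ n) (hp : 1 < p) (hk : n * (p - 1) < 2) :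
    ∃ (c C : ℝ) (N : ℕ) (φ : Heis n → ℝ), 0 < c ∧ 0 ≤ C ∧ Continuous φ ∧ (∀ q, 0 < φ q) ∧
      ∀ (η : SF n) (h : Heis n → ℝ) (r : ℝ), 0 ≤ r → r ≤ 1 → (∀ q, ev q η = (h q : ℂ)) →
      (∀ q, 0 ≤ h q) → (∀ q, h q ≤ 1) →
      (∀ q, √(rip q (fun i => (HS n).Zb i η) (fun i => (HS n).Zb i η)) ≤ r) →
      ∃ H : Fin n → SF n, (∀ i q, h q = 0 → (H i).1 q = 0) ∧
        ∀ q, c * φ q * h q ^ N - (if h q = 0 then 0 else C * r ^ (2 * n + 4)) ≤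
          (((HS n).dv H).1 q).re := by
  have hn' : (1 : ℝ) ≤ n := by exact_mod_cast hn
  have hp' : 0 < p - 1 := by linarith
  have hk0 : 0 < n * (p - 1) := by positivity
  obtain ⟨μ, hμ⟩ : ∃ μ : ℝ, μ = (2 * n - 2) / (n * (p - 1)) := ⟨_, rfl⟩
  have hμk : μ * (n * (p - 1)) = 2 * n - 2 := by rw [hμ]; field_simp
  have hμ0 : 0 ≤ μ := by
    rw [hμ]; apply div_nonneg <;> linarith
  have hμ1 : (n : ℝ) - 1 ≤ μ := by
    rw [hμ, le_div_iff₀ hk0]; nlinarith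
  obtain ⟨σ, hσ⟩ : ∃ σ : ℕ, σ = ⌈2 * μ⌉₊ + 1 := ⟨_, rfl⟩
  have hσ2 : 2 * μ ≤ σ := by
    rw [hσ]; push_cast; linarith [Nat.le_ceil (2 * μ)]
  obtain ⟨δ, Λ, C, hδ, hΛ, hC, key⟩ := pointwise hn (n * (p - 1)) hk0 hk σ
  obtain ⟨C', hC', key2⟩ := Sc.absorb δ C μ ((4 * n ^ 2) ^ μ) hδ hC hμ0 (by positivity) (2 * n - 2) σ
    (by rw [Nat.cast_sub (by omega)]; push_cast; linarith) hσ2 (by omega)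
  have hFpos : ∀ q, 0 < (ev q P.F).re := fun q => by
    rw [P.F_apply]; have := Real.rpow_pos_of_pos (P.pos q) (p - 1)
    positivity
  have he : ∀ q, P.u q ^ ((2 * n - 2 : ℝ) / n) = (4 * n ^ 2) ^ μ * (ev q P.F).re ^ μ := by
    intro q
    rw [← Real.mul_rpow (by positivity) (hFpos q).le, P.F_apply, ← mul_assoc, mul_one_div_cancel (by positivity),
      one_mul, ← Real.rpow_mul (P.pos q).le]
    congr 1
    rw [div_eq_iff (by positivity), ← hμk]; ring
  refine ⟨δ / 8, C', σ + 6, fun q => (4 * n ^ 2) ^ μ * (ev q P.F).re ^ μ * (ev q P.F).re ^ 3,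
    by positivity, hC', ?_, ?_, ?_⟩
  · have h1 : Continuous fun q => (ev q P.F).re := Complex.continuous_re.comp (smth P.F).continuous
    exact (continuous_const.mul (h1.rpow_const fun q => Or.inl (hFpos q).ne')).mul (h1.pow 3)
  · intro q
    have := Real.rpow_pos_of_pos (hFpos q) μ
    have := hFpos q
    positivity
  intro η h r hr hr1 hη hh hh1 hω
  refine ⟨tvf P.f P.F (P.pw ((2 * n - 2 : ℝ) / n)) η σ δ (Λ * r ^ 2), ?_, ?_⟩
  · intro i q h0
    have := hη q
    rw [h0] at this
    rw [← ev_apply, tvf]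
    simp only [map_add, map_sub, map_mul, map_pow, this]
    rw [Complex.ofReal_zero, zero_pow (by omega), zero_pow (by omega)]
    simp
  · intro q
    have h1 := key2 (ev q P.F).re (h q) r (hFpos q).le (hh q) (hh1 q) hr hr1
    have h2 := key P.f P.F (P.pw ((2 * n - 2 : ℝ) / n)) η (P.good hn) (by
      intro i
      have := Zbd_of_pd (P.pd_pw hn ((2 * n - 2 : ℝ) / n)) i
      rw [mul_div_cancel₀ _ (by positivity)] at this
      exact this) q r (P.u q ^ ((2 * n - 2 : ℝ) / n)) (h q) (hFpos q).le (Real.rpow_nonneg (P.pos q).le _)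
      (hh q) hr rfl (hη q) (hω q)
    rw [he q] at h2
    rw [show 6 + (2 * n - 2) = 2 * n + 4 by omega] at h1
    exact h1.trans h2
end SF

namespace SF
variable {n : ℕ}

lemma hcs_pd {x : SF n} (hx : HasCompactSupport x.1) (v : Heis n) : HasCompactSupport (pd v x).1 := by
  have := hx.fderiv (𝕜 := ℝ)
  exact this.comp_left (g := fun L : Heis n →L[ℝ] ℂ => L v) rfl

lemma hcs_mul {x : SF n} (hx : HasCompactSupport x.1) (y : SF n) : HasCompactSupport (y * x).1 :=
  HasCompactSupport.mul_left hx

lemma hcs_Zbd {x : SF n} (hx : HasCompactSupport x.1) (j : Fin n) : HasCompactSupport (Zbd j x).1 := by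
  have e : (Zbd j x).1 = (fun q => (cst (1/2) * pd (ex j) x).1 q + (cst (I/2) * pd (ey j) x).1 q)
     + (fun q => (cst (-I) * zc j * pd et x).1 q) := by
    funext q
    rw [Zbd_apply]
    simp only [coe_add', coe_sub', coe_mul', Pi.add_apply, cst_apply]
    ring
  rw [e]
  exact ((hcs_mul (hcs_pd hx _) _).add (hcs_mul (hcs_pd hx _) _)).add (hcs_mul (hcs_pd hx _) _)

lemma integ {x : SF n} (hx : HasCompactSupport x.1) : Integrable x.1 :=
  (smth x).continuous.integrable_of_hasCompactSupport hx

instance haarHeis : (volume : Measure (Heis n)).IsAddHaarMeasure :=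
  Measure.prod.instIsAddHaarMeasure _ _

lemma int_pd {x : SF n} (hx : HasCompactSupport x.1) (v : Heis n) : ∫ q, (pd v x).1 q = 0 := by
  have := integral_mul_fderiv_eq_neg_fderiv_mul_of_integrable (μ := (volume : Measure (Heis n)))
    (f := fun _ : Heis n => (1 : ℂ)) (g := x.1) (v := v) (by simp)
    (by simp only [one_mul]; exact integ (hcs_pd hx v)) (by simpa using integ hx) (by simp) (fun q _ => diffAt x q)
  simp only [one_mul] at this
  refine Eq.trans this ?_
  simp

lemma int_Zbd {x : SF n} (hx : HasCompactSupport x.1) (j : Fin n) : ∫ q, (Zbd j x).1 q = 0 := by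
  have e : Zbd j x = pd (ex j) (cst (1/2) * x) + pd (ey j) (cst (I/2) * x) + pd et (cst (-I) * zc j * x) := by
    rw [Zbd_apply]
    simp only [Derivation.leibniz, der_cst, smul_eq_mul, pd_et_zc]
    have h1 : (cst (I / 2) : SF n) = cst (1 / 2) * cst I := by
      apply Subtype.ext; funext q
      change I / 2 = 1 / 2 * I
      ring
    rw [h1, cstneg]
    ring
  rw [e]
  simp only [coe_add']
  rw [integral_add, integral_add, int_pd (hcs_mul hx _), int_pd (hcs_mul hx _), int_pd (hcs_mul hx _)]
  · simp
  · exact integ (hcs_pd (hcs_mul hx _) _)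
  · exact integ (hcs_pd (hcs_mul hx _) _)
  · exact (integ (hcs_pd (hcs_mul hx _) _)).add (integ (hcs_pd (hcs_mul hx _) _))
  · exact integ (hcs_pd (hcs_mul hx _) _)

lemma dv_apply (H : Fin n → SF n) (q : Heis n) : ((HS n).dv H).1 q = ∑ i, (Zbd i (H i)).1 q := by
  rw [← ev_apply]
  change ev q (∑ i, Zbd i (H i)) = _
  rw [map_sum]; rfl

lemma int_dv {H : Fin n → SF n} (hH : ∀ i, HasCompactSupport (H i).1) :
    Integrable ((HS n).dv H).1 ∧ ∫ q, ((HS n).dv H).1 q = 0 := by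
  have e : ((HS n).dv H).1 = fun q => ∑ i, (Zbd i (H i)).1 q := funext (dv_apply H)
  rw [e]
  refine ⟨integrable_finset_sum _ fun i _ => integ (hcs_Zbd (hH i) i), ?_⟩
  rw [integral_finset_sum _ fun i _ => integ (hcs_Zbd (hH i) i)]
  exact Finset.sum_eq_zero fun i _ => int_Zbd (hH i) i

/-- Anisotropic contraction. -/
def ctr (s : ℝ) : Heis n →L[ℝ] Heis n :=
  (s • ContinuousLinearMap.fst ℝ (Fin n → ℂ) ℝ).prod (s ^ 2 • ContinuousLinearMap.snd ℝ (Fin n → ℂ) ℝ)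

lemma ctr_apply (s : ℝ) (q : Heis n) : ctr s q = (s • q.1, s ^ 2 * q.2) := rfl

def cmp (s : ℝ) (x : SF n) : SF n := ⟨fun q => x.1 (ctr s q), (smth x).comp (ctr s).contDiff⟩

lemma cmp_apply (s : ℝ) (x : SF n) (q : Heis n) : (cmp s x).1 q = x.1 (ctr s q) := rfl

lemma pd_cmp (s : ℝ) (x : SF n) (v q : Heis n) : (pd v (cmp s x)).1 q = fderiv ℝ x.1 (ctr s q) (ctr s v) := by
  rw [pd_apply]
  change fderiv ℝ (x.1 ∘ ctr s) q v = _
  rw [fderiv_comp q (diffAt x _) (ctr s).differentiableAt, (ctr s).fderiv]; rfl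

lemma ctr_ex (s : ℝ) (j : Fin n) : ctr s (ex j) = s • ex j := by
  simp [ctr_apply, ex]
lemma ctr_ey (s : ℝ) (j : Fin n) : ctr s (ey j) = s • ey j := by
  simp [ctr_apply, ey]
lemma ctr_et (s : ℝ) : ctr s (et : Heis n) = (s ^ 2) • et := by
  simp [ctr_apply, et]

lemma Zbd_cmp (s : ℝ) (x : SF n) (j : Fin n) (q : Heis n) :
    (Zbd j (cmp s x)).1 q = s * (Zbd j x).1 (ctr s q) := by
  rw [Zbd_apply, Zbd_apply]
  simp only [coe_add', coe_sub', coe_mul', cst_apply, pd_cmp, ctr_ex, ctr_ey, ctr_et, map_smul, Complex.real_smul]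
  simp only [pd_apply]
  have : (zc j).1 (ctr s q) = s * (zc j).1 q := by
    simp [zc, ctr_apply]
  rw [this]
  push_cast
  ring

lemma sqrt_rip_le (q : Heis n) (X : Fin n → SF n) : √(rip q X X) ≤ ∑ i, ‖ev q (X i)‖ := by
  rw [rip_self]
  apply Real.sqrt_le_iff.2
  refine ⟨Finset.sum_nonneg fun i _ => norm_nonneg _, ?_⟩
  exact Finset.sum_sq_le_sq_sum_of_nonneg fun i _ => norm_nonneg _

/-- The family of cut-off functions. -/
lemma cutoffs (n : ℕ) : ∃ B : ℝ, 0 ≤ B ∧ ∀ R : ℝ, 1 ≤ R → ∃ (η : SF n) (h : Heis n → ℝ),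
    Continuous h ∧ HasCompactSupport h ∧ (∀ q, ev q η = (h q : ℂ)) ∧ (∀ q, 0 ≤ h q) ∧ (∀ q, h q ≤ 1) ∧
    (∀ q ∈ Metric.closedBall (0 : Heis n) 1, h q = 1) ∧
    (∀ q, h q ≠ 0 → q ∈ (Metric.closedBall (0 : Fin n → ℂ) (2 * R)) ×ˢ (Metric.closedBall (0 : ℝ) (2 * R ^ 2))) ∧
    ∀ q, √(rip q (fun i => (HS n).Zb i η) (fun i => (HS n).Zb i η)) ≤ B / R := by
  let b : ContDiffBump (0 : Heis n) := ⟨1, 2, by norm_num, by norm_num⟩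
  let x : SF n := rl b b.contDiff
  have hx : HasCompactSupport x.1 := b.hasCompactSupport.comp_left (g := fun r : ℝ => (r : ℂ)) rfl
  have hB : ∃ B : ℝ, ∀ q, ∑ i, ‖(Zbd i x).1 q‖ ≤ B := by
    have : ∀ i, ∃ B : ℝ, ∀ q, ‖(Zbd i x).1 q‖ ≤ B := fun i =>
      (hcs_Zbd hx i).exists_bound_of_continuous (smth _).continuous
    choose B hB using this
    exact ⟨∑ i, B i, fun q => Finset.sum_le_sum fun i _ => hB i q⟩
  obtain ⟨B, hB⟩ := hB
  refine ⟨B, (Finset.sum_nonneg fun i _ => norm_nonneg _).trans (hB 0), ?_⟩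
  intro R hR
  have hR0 : 0 < R := by linarith
  have hsup : ∀ q, b (ctr R⁻¹ q) ≠ 0 → q ∈ (Metric.closedBall (0 : Fin n → ℂ) (2 * R)) ×ˢ (Metric.closedBall (0 : ℝ) (2 * R ^ 2)) := by
    intro q hq
    have h1 : ctr R⁻¹ q ∈ Function.support b := hq
    rw [b.support_eq, mem_ball_zero_iff, ctr_apply, Prod.norm_def, max_lt_iff] at h1
    obtain ⟨h1, h2⟩ := h1
    change _ < (2 : ℝ) at h1
    change _ < (2 : ℝ) at h2
    simp only [norm_smul, norm_mul, norm_inv, norm_pow, Real.norm_of_nonneg hR0.le] at h1 h2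
    rw [inv_mul_lt_iff₀ hR0] at h1
    rw [inv_pow, inv_mul_lt_iff₀ (by positivity)] at h2
    refine ⟨?_, ?_⟩
    · rw [mem_closedBall_zero_iff]; linarith
    · rw [mem_closedBall_zero_iff]; linarith
  refine ⟨cmp R⁻¹ x, fun q => b (ctr R⁻¹ q), b.continuous.comp (ctr R⁻¹).continuous, ?_, ?_, ?_, ?_, ?_, hsup, ?_⟩
  · refine HasCompactSupport.intro ((isCompact_closedBall (0 : Fin n → ℂ) (2 * R)).prod
      (isCompact_closedBall (0 : ℝ) (2 * R ^ 2))) ?_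
    intro q hq
    by_contra h
    exact hq (hsup q h)
  · intro q; rfl
  · intro q; exact b.nonneg
  · intro q; exact b.le_one
  · intro q hq
    apply b.one_of_mem_closedBall
    rw [mem_closedBall_zero_iff, Prod.norm_def, max_le_iff] at hq
    rw [mem_closedBall_zero_iff, ctr_apply, Prod.norm_def, max_le_iff]
    change _ ≤ (1 : ℝ) ∧ _ ≤ (1 : ℝ)
    simp only [norm_smul, norm_mul, norm_inv, norm_pow, Real.norm_of_nonneg hR0.le]
    constructor
    · rw [inv_mul_le_iff₀ hR0]; linarith [hq.1]
    · rw [inv_pow, inv_mul_le_iff₀ (by positivity)]; nlinarith [hq.2]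
  · intro q
    refine (sqrt_rip_le q _).trans ?_
    have : ∀ i, ‖ev q ((HS n).Zb i (cmp R⁻¹ x))‖ = R⁻¹ * ‖(Zbd i x).1 (ctr R⁻¹ q)‖ := by
      intro i
      change ‖(Zbd i (cmp R⁻¹ x)).1 q‖ = _
      rw [Zbd_cmp, norm_mul, Complex.norm_real, Real.norm_of_nonneg (by positivity)]
    rw [Finset.sum_congr rfl fun i _ => this i, ← Finset.mul_sum, div_eq_inv_mul]
    have := hB (ctr R⁻¹ q)
    gcongr

lemma vol_box (n : ℕ) : ∃ V : ℝ, 0 ≤ V ∧ ∀ R : ℝ, 1 ≤ R →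
    (volume : Measure (Heis n)).real ((Metric.closedBall (0 : Fin n → ℂ) (2 * R)) ×ˢ (Metric.closedBall (0 : ℝ) (2 * R ^ 2)))
      = V * R ^ (2 * n + 2) := by
  refine ⟨4 * 2 ^ (2 * n) * (volume : Measure (Fin n → ℂ)).real (Metric.closedBall 0 1), by positivity, ?_⟩
  intro R hR
  have e : (volume : Measure (Heis n)) = (volume : Measure (Fin n → ℂ)).prod (volume : Measure ℝ) := rfl
  rw [e, measureReal_prod_prod, measureReal_def, measureReal_def,
    Measure.addHaar_closedBall' _ _ (by linarith : 0 ≤ 2 * R), ENNReal.toReal_mul, Real.volume_closedBall,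
    ENNReal.toReal_ofReal (by positivity), ENNReal.toReal_ofReal (by positivity)]
  have : Module.finrank ℝ (Fin n → ℂ) = 2 * n := by
    rw [Module.finrank_pi_fintype]; simp [mul_comm]
  rw [this, ← measureReal_def, mul_pow]; ring

theorem Pot.absurd {p : ℝ} (P : Pot n p) (hn : 1 ≤ n) (hp : 1 < p) (hk : n * (p - 1) < 2) : False := by
  obtain ⟨c, C, N, φ, hc, hC, hφc, hφ, key⟩ := P.lower hn hp hk
  obtain ⟨B, hB, cut⟩ := cutoffs n
  obtain ⟨V, hV, vol⟩ := vol_box n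
  obtain ⟨K, hK⟩ : ∃ K, K = Metric.closedBall (0 : Heis n) 1 := ⟨_, rfl⟩
  have hKc : IsCompact K := hK ▸ isCompact_closedBall _ _
  have hφK : IntegrableOn φ K := hφc.continuousOn.integrableOn_compact hKc
  have hI : 0 < ∫ q in K, φ q := by
    rw [setIntegral_pos_iff_support_of_nonneg_ae (Filter.Eventually.of_forall fun q => (hφ q).le) hφK]
    have : Function.support φ = Set.univ := by
      ext q; simp [(hφ q).ne']
    rw [this, Set.univ_inter, hK]
    exact Metric.measure_closedBall_pos _ _ (by norm_num)
  have bd : ∀ R : ℝ, max 1 B ≤ R → c * (∫ q in K, φ q) ≤ C * B ^ (2 * n + 4) * V / R ^ 2 := by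
    intro R hR
    have hR1 : 1 ≤ R := (le_max_left _ _).trans hR
    have hRB : B ≤ R := (le_max_right _ _).trans hR
    have hR0 : 0 < R := by linarith
    obtain ⟨η, h, hhc, hhs, hη, hh0, hh1, hhK, hhS, hhr⟩ := cut R hR1
    obtain ⟨H, hH0, hH⟩ := key η h (B / R) (by positivity) ((div_le_one hR0).2 hRB) hη hh0 hh1 hhr
    have hHs : ∀ i, HasCompactSupport (H i).1 := by
      intro i
      refine hhs.mono ?_
      intro q hq h0
      exact hq (hH0 i q h0)
    obtain ⟨hi, h0⟩ := int_dv hHs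
    obtain ⟨S, hS⟩ : ∃ S, S = (Metric.closedBall (0 : Fin n → ℂ) (2 * R)) ×ˢ (Metric.closedBall (0 : ℝ) (2 * R ^ 2)) := ⟨_, rfl⟩
    have hScomp : IsCompact S := hS ▸ (isCompact_closedBall _ _).prod (isCompact_closedBall _ _)
    have hSm : MeasurableSet S := hScomp.isClosed.measurableSet
    obtain ⟨D, hD⟩ : ∃ D, D = C * (B / R) ^ (2 * n + 4) := ⟨_, rfl⟩
    have hD0 : 0 ≤ D := by rw [hD]; positivity
    have hvS : volume S ≠ ⊤ := hScomp.measure_lt_top.ne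
    have hiS : Integrable (S.indicator fun _ => D) := by
      rw [integrable_indicator_iff hSm]
      exact integrableOn_const hvS
    have hre : ∫ q, (((HS n).dv H).1 q).re = 0 := by
      have := integral_re hi
      rw [h0] at this
      exact this
    have le1 : ∀ q, K.indicator (fun q => c * φ q) q ≤ (((HS n).dv H).1 q).re + S.indicator (fun _ => D) q := by
      intro q
      have h1 := hH q
      rw [← hD] at h1
      have h2 : (if h q = 0 then 0 else D) ≤ S.indicator (fun _ => D) q := by
        split_ifs with h3
        · exact Set.indicator_nonneg (fun _ _ => hD0) q
        · rw [Set.indicator_of_mem (hS ▸ hhS q h3)]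
      have h3 : K.indicator (fun q => c * φ q) q ≤ c * φ q * h q ^ N := by
        by_cases hq : q ∈ K
        · rw [Set.indicator_of_mem hq, hhK q (hK ▸ hq)]; simp
        · rw [Set.indicator_of_notMem hq]
          have := hφ q
          have := hh0 q
          positivity
      linarith
    have hφi : Integrable (K.indicator fun q => c * φ q) :=
      (integrable_indicator_iff hKc.isClosed.measurableSet).2 (hφK.const_mul c)
    have hire : Integrable (fun q => (((HS n).dv H).1 q).re) := hi.re
    have h4 := integral_mono (μ := volume) hφi (hire.add hiS) le1
    rw [integral_indicator hKc.isClosed.measurableSet, integral_const_mul] at h4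
    have h5 : ∫ q, (((HS n).dv H).1 q).re + S.indicator (fun _ => D) q = D * (V * R ^ (2 * n + 2)) := by
      rw [integral_add hire hiS, integral_indicator hSm, setIntegral_const, hS, vol R hR1, smul_eq_mul, hre]
      ring
    refine h4.trans (le_of_eq (h5.trans ?_))
    rw [hD, div_pow, show 2 * n + 4 = (2 * n + 2) + 2 by ring, pow_add R]
    field_simp
  obtain ⟨R, hR⟩ : ∃ R, R = max (max 1 B) (C * B ^ (2 * n + 4) * V / (c * ∫ q in K, φ q) + 1) := ⟨_, rfl⟩
  have h1 := bd R (hR ▸ le_max_left _ _)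
  have hR1 : 1 ≤ R := hR ▸ (le_max_left _ _).trans (le_max_left _ _)
  have h2 : C * B ^ (2 * n + 4) * V / (c * ∫ q in K, φ q) < R := by
    have : _ ≤ R := hR ▸ le_max_right _ _
    linarith
  have hcI : 0 < c * ∫ q in K, φ q := by positivity
  rw [div_lt_iff₀ hcI] at h2
  rw [le_div_iff₀ (by positivity)] at h1
  have h3 : R * (c * ∫ q in K, φ q) ≤ c * (∫ q in K, φ q) * R ^ 2 := by
    have : 0 ≤ (c * ∫ q in K, φ q) * (R * (R - 1)) := by
      have : 0 ≤ R - 1 := by linarith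
      positivity
    nlinarith
  linarith
end SF

namespace SMP
variable {n : ℕ}

lemma line2 {w : Heis n → ℝ} (hw : ContDiff ℝ (⊤ : ℕ∞) w) (Vf : Heis n → Heis n)
    (hD : ContDiff ℝ (⊤ : ℕ∞) (fun q => fderiv ℝ w q (Vf q))) (p : Heis n)
    (hV : ∀ s : ℝ, Vf (p + s • Vf p) = Vf p) :
    fderiv ℝ (fun q => fderiv ℝ w q (Vf q)) p (Vf p) = deriv (deriv fun s : ℝ => w (p + s • Vf p)) 0 := by
  have hl : ∀ s : ℝ, HasDerivAt (fun s : ℝ => p + s • Vf p) (Vf p) s := by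
    intro s
    simpa using ((hasDerivAt_id s).smul_const (Vf p)).const_add p
  have h1 : ∀ (f : Heis n → ℝ), ContDiff ℝ (⊤ : ℕ∞) f → ∀ s : ℝ,
      deriv (fun s : ℝ => f (p + s • Vf p)) s = fderiv ℝ f (p + s • Vf p) (Vf p) := by
    intro f hf s
    exact ((hf.differentiable (by simp) (p + s • Vf p)).hasFDerivAt.comp_hasDerivAt s (hl s)).deriv
  have h2 : (deriv fun s : ℝ => w (p + s • Vf p)) =
      fun s => (fun q => fderiv ℝ w q (Vf q)) (p + s • Vf p) := by
    funext s
    rw [h1 w hw s]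
    simp only [hV]
  rw [h2, h1 _ hD 0]
  simp

lemma Xline (j : Fin n) (p : Heis n) (s : ℝ) : XVec j (p + s • XVec j p) = XVec j p := by
  simp [XVec]
lemma Yline (j : Fin n) (p : Heis n) (s : ℝ) : YVec j (p + s • YVec j p) = YVec j p := by
  simp [YVec]

lemma XX {w : Heis n → ℝ} (hw : ContDiff ℝ (⊤ : ℕ∞) w) (j : Fin n) (p : Heis n) :
    Xop j (Xop j w) p = deriv (deriv fun s : ℝ => w (p + s • XVec j p)) 0 :=
  line2 hw (XVec j) (SF.smooth_X hw j) p (Xline j p)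
lemma YY {w : Heis n → ℝ} (hw : ContDiff ℝ (⊤ : ℕ∞) w) (j : Fin n) (p : Heis n) :
    Yop j (Yop j w) p = deriv (deriv fun s : ℝ => w (p + s • YVec j p)) 0 :=
  line2 hw (YVec j) (SF.smooth_Y hw j) p (Yline j p)

lemma second_nonneg {g : ℝ → ℝ} (hg : Differentiable ℝ g) (h : IsLocalMin g 0) : 0 ≤ deriv (deriv g) 0 := by
  by_contra hc
  push Not at hc
  have hm : IsLocalMax g 0 := isLocalMax_of_deriv_deriv_neg hc h.deriv_eq_zero hg.continuous.continuousAt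
  have he : g =ᶠ[𝓝 0] fun _ => g 0 := by
    filter_upwards [h, hm] with x h1 h2
    exact le_antisymm h2 h1
  have h2 := he.deriv.deriv_eq
  simp at h2
  rw [h2] at hc
  exact lt_irrefl _ hc

lemma line_min {w : Heis n → ℝ} (p v : Heis n) (h : IsLocalMin w p) :
    IsLocalMin (fun s : ℝ => w (p + s • v)) 0 := by
  have hc : Tendsto (fun s : ℝ => p + s • v) (𝓝 0) (𝓝 p) := by
    have : Continuous fun s : ℝ => p + s • v := by fun_prop
    simpa using this.tendsto 0
  have := hc.eventually h
  filter_upwards [this] with s hs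
  simpa using hs

lemma subLap_nonneg {w : Heis n → ℝ} (hw : ContDiff ℝ (⊤ : ℕ∞) w) {p : Heis n} (h : IsLocalMin w p) :
    0 ≤ subLap w p := by
  unfold subLap
  have hd : ∀ v : Heis n, Differentiable ℝ fun s : ℝ => w (p + s • v) := by
    intro v
    exact (hw.differentiable (by simp)).comp (by fun_prop)
  refine Finset.sum_nonneg fun j _ => add_nonneg ?_ ?_
  · rw [XX hw]; exact second_nonneg (hd _) (line_min p _ h)
  · rw [YY hw]; exact second_nonneg (hd _) (line_min p _ h)

lemma subLap_sub {v b : Heis n → ℝ} (hv : ContDiff ℝ (⊤ : ℕ∞) v) (hb : ContDiff ℝ (⊤ : ℕ∞) b) (p : Heis n) :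
    subLap (fun q => v q - b q) p = subLap v p - subLap b p := by
  have key : ∀ {v b : Heis n → ℝ}, ContDiff ℝ (⊤ : ℕ∞) v → ContDiff ℝ (⊤ : ℕ∞) b → ∀ q V,
      fderiv ℝ (fun q => v q - b q) q V = fderiv ℝ v q V - fderiv ℝ b q V := by
    intro v b hv hb q V
    rw [fderiv_fun_sub (hv.differentiable (by simp) q) (hb.differentiable (by simp) q)]; rfl
  unfold subLap
  rw [← Finset.sum_sub_distrib]
  refine Finset.sum_congr rfl fun j _ => ?_
  have hX : Xop j (fun q => v q - b q) = fun q => Xop j v q - Xop j b q := by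
    funext q; exact key hv hb q _
  have hY : Yop j (fun q => v q - b q) = fun q => Yop j v q - Yop j b q := by
    funext q; exact key hv hb q _
  rw [hX, hY]
  have e1 : Xop j (fun q => Xop j v q - Xop j b q) p = Xop j (Xop j v) p - Xop j (Xop j b) p :=
    key (SF.smooth_X hv j) (SF.smooth_X hb j) p _
  have e2 : Yop j (fun q => Yop j v q - Yop j b q) p = Yop j (Yop j v) p - Yop j (Yop j b) p :=
    key (SF.smooth_Y hv j) (SF.smooth_Y hb j) p _
  rw [e1, e2]; ring

lemma nsq_line (z : Fin n → ℂ) (j : Fin n) (w : ℂ) (s : ℝ) :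
    nsq (z + s • (Pi.single j w : Fin n → ℂ)) = nsq z + (2 * s * ((z j).re * w.re + (z j).im * w.im) + s ^ 2 * (w.re ^ 2 + w.im ^ 2)) := by
  unfold nsq
  have : ∀ i, Complex.normSq ((z + s • (Pi.single j w : Fin n → ℂ)) i) = Complex.normSq (z i) +
      if i = j then (2 * s * ((z j).re * w.re + (z j).im * w.im) + s ^ 2 * (w.re ^ 2 + w.im ^ 2)) else 0 := by
    intro i
    by_cases h : i = j
    · subst h
      simp [Complex.normSq_apply]; ring
    · simp [h]
  rw [Finset.sum_congr rfl fun i _ => this i, Finset.sum_add_distrib]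
  simp

lemma d2 (c α ε ρ x t y : ℝ) :
    deriv (deriv fun s : ℝ => c * Real.exp (-(α * ((ρ + 2 * s * x + s ^ 2) ^ 2 + (t + 2 * s * y) ^ 2)))
      + ε * (ρ + 2 * s * x + s ^ 2)) 0 =
    c * Real.exp (-(α * (ρ ^ 2 + t ^ 2))) * (α ^ 2 * (4 * ρ * x + 4 * t * y) ^ 2 - α * (8 * x ^ 2 + 8 * y ^ 2 + 4 * ρ))
      + 2 * ε := by
  have hP : ∀ s : ℝ, HasDerivAt (fun s : ℝ => ρ + 2 * s * x + s ^ 2) (2 * x + 2 * s) s := by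
    intro s
    have := (((hasDerivAt_id s).const_mul 2).mul_const x).const_add ρ |>.add ((hasDerivAt_id s).pow 2)
    exact this.congr_deriv (by simp)
  have hT : ∀ s : ℝ, HasDerivAt (fun s : ℝ => t + 2 * s * y) (2 * y) s := by
    intro s
    have := (((hasDerivAt_id s).const_mul 2).mul_const y).const_add t
    exact this.congr_deriv (by simp)
  have hN : ∀ s : ℝ, HasDerivAt (fun s : ℝ => -(α * ((ρ + 2 * s * x + s ^ 2) ^ 2 + (t + 2 * s * y) ^ 2)))
      (-(α * (2 * (ρ + 2 * s * x + s ^ 2) * (2 * x + 2 * s) + 2 * (t + 2 * s * y) * (2 * y)))) s := by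
    intro s
    have := ((((hP s).pow 2).add ((hT s).pow 2)).const_mul α).neg
    exact this.congr_deriv (by simp)
  have h1 : (deriv fun s : ℝ => c * Real.exp (-(α * ((ρ + 2 * s * x + s ^ 2) ^ 2 + (t + 2 * s * y) ^ 2)))
      + ε * (ρ + 2 * s * x + s ^ 2)) = fun s =>
      c * (Real.exp (-(α * ((ρ + 2 * s * x + s ^ 2) ^ 2 + (t + 2 * s * y) ^ 2))) *
      (-(α * (2 * (ρ + 2 * s * x + s ^ 2) * (2 * x + 2 * s) + 2 * (t + 2 * s * y) * (2 * y)))))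
      + ε * (2 * x + 2 * s) := by
    funext s
    exact (((hN s).exp.const_mul c).add ((hP s).const_mul ε)).deriv
  rw [h1]
  have hx : HasDerivAt (fun s : ℝ => 2 * x + 2 * s) 2 0 := by
    have := ((hasDerivAt_id (0 : ℝ)).const_mul 2).const_add (2 * x)
    exact this.congr_deriv (by simp)
  have h2 := ((((hN 0).exp.mul ((((((hP 0).const_mul 2).mul hx)).add (((hT 0).const_mul 2).mul_const (2 * y))).const_mul α).neg).const_mul c).add
    (hx.const_mul ε)).deriv
  refine Eq.trans h2 ?_
  simp
  ring

/-- fourth power of the gauge -/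
def NN (q : Heis n) : ℝ := (nsq q.1) ^ 2 + q.2 ^ 2

lemma smooth_nsq : ContDiff ℝ (⊤ : ℕ∞) (fun q : Heis n => nsq q.1) := by
  unfold nsq
  refine ContDiff.sum fun j _ => ?_
  have h1 : ContDiff ℝ (⊤ : ℕ∞) (fun q : Heis n => q.1 j) := by fun_prop
  have h2 := Complex.reCLM.contDiff.comp h1
  have h3 := Complex.imCLM.contDiff.comp h1
  exact (h2.mul h2).add (h3.mul h3)

lemma smooth_NN : ContDiff ℝ (⊤ : ℕ∞) (NN : Heis n → ℝ) :=
  (smooth_nsq.pow 2).add (contDiff_snd.pow 2)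

/-- the barrier -/
def bar (c α ε : ℝ) (q : Heis n) : ℝ := c * Real.exp (-(α * NN q)) + ε * nsq q.1

lemma smooth_bar (c α ε : ℝ) : ContDiff ℝ (⊤ : ℕ∞) (bar c α ε : Heis n → ℝ) :=
  (contDiff_const.mul (contDiff_const.mul smooth_NN).neg.exp).add (contDiff_const.mul smooth_nsq)

lemma subLap_bar (c α ε : ℝ) (q : Heis n) : subLap (bar c α ε) q =
    c * Real.exp (-(α * NN q)) * (8 * α * nsq q.1 * (2 * α * NN q - (n + 2))) + 4 * n * ε := by
  unfold subLap
  have hX : ∀ j, Xop j (Xop j (bar c α ε)) q = c * Real.exp (-(α * NN q)) *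
      (α ^ 2 * (4 * nsq q.1 * (q.1 j).re + 4 * q.2 * (q.1 j).im) ^ 2 - α * (8 * (q.1 j).re ^ 2 + 8 * (q.1 j).im ^ 2 + 4 * nsq q.1)) + 2 * ε := by
    intro j
    rw [XX (smooth_bar c α ε) j q]
    have := d2 c α ε (nsq q.1) (q.1 j).re q.2 (q.1 j).im
    rw [NN, ← this]
    congr 2
    funext s
    have e : nsq (q + s • XVec j q).1 = nsq q.1 + 2 * s * (q.1 j).re + s ^ 2 := by
      change nsq (q.1 + s • (Pi.single j (1 : ℂ) : Fin n → ℂ)) = _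
      rw [nsq_line]; simp; ring
    have e2 : (q + s • XVec j q).2 = q.2 + 2 * s * (q.1 j).im := by
      simp [XVec]; ring
    rw [bar, NN, e, e2]
  have hY : ∀ j, Yop j (Yop j (bar c α ε)) q = c * Real.exp (-(α * NN q)) *
      (α ^ 2 * (4 * nsq q.1 * (q.1 j).im + 4 * q.2 * -(q.1 j).re) ^ 2 - α * (8 * (q.1 j).im ^ 2 + 8 * (-(q.1 j).re) ^ 2 + 4 * nsq q.1)) + 2 * ε := by
    intro j
    rw [YY (smooth_bar c α ε) j q]
    have := d2 c α ε (nsq q.1) (q.1 j).im q.2 (-(q.1 j).re)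
    rw [NN, ← this]
    congr 2
    funext s
    have e : nsq (q + s • YVec j q).1 = nsq q.1 + 2 * s * (q.1 j).im + s ^ 2 := by
      change nsq (q.1 + s • (Pi.single j I : Fin n → ℂ)) = _
      rw [nsq_line]; simp; ring
    have e2 : (q + s • YVec j q).2 = q.2 + 2 * s * (-(q.1 j).re) := by
      simp [YVec]; ring
    rw [bar, NN, e, e2]
  have hS : ∀ j, Xop j (Xop j (bar c α ε)) q + Yop j (Yop j (bar c α ε)) q =
      c * Real.exp (-(α * NN q)) * (16 * α ^ 2 * NN q - 16 * α) * Complex.normSq (q.1 j) +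
      (4 * ε - c * Real.exp (-(α * NN q)) * (8 * α * nsq q.1)) := by
    intro j
    rw [hX, hY, Complex.normSq_apply]
    generalize Real.exp (-(α * NN q)) = E
    rw [NN]; ring
  rw [Finset.sum_congr rfl fun j _ => hS j, Finset.sum_add_distrib, ← Finset.mul_sum]
  have : ∑ j, Complex.normSq (q.1 j) = nsq q.1 := rfl
  rw [this]
  simp
  ring

lemma NN_le {q : Heis n} {a : ℝ} (ha : 0 ≤ a) (h : NN q ≤ a ^ 4) :
    nsq q.1 ≤ a ^ 2 ∧ ‖q.1‖ ≤ a ∧ ‖q.2‖ ≤ a ^ 2 := by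
  have h0 : 0 ≤ nsq q.1 := Finset.sum_nonneg fun j _ => Complex.normSq_nonneg _
  have h1 : nsq q.1 ≤ a ^ 2 := by
    refine le_of_pow_le_pow_left₀ (n := 2) (by norm_num) (by positivity) ?_
    unfold NN at h; nlinarith [sq_nonneg q.2]
  refine ⟨h1, ?_, ?_⟩
  · rw [pi_norm_le_iff_of_nonneg ha]
    intro j
    refine le_of_pow_le_pow_left₀ (n := 2) (by norm_num) ha ?_
    refine le_trans ?_ h1
    rw [← Complex.normSq_eq_norm_sq]
    exact Finset.single_le_sum (f := fun j => Complex.normSq (q.1 j)) (fun i _ => Complex.normSq_nonneg _) (Finset.mem_univ j)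
  · refine abs_le_of_sq_le_sq (a := q.2) ?_ (by positivity)
    unfold NN at h; nlinarith [sq_nonneg (nsq q.1)]

theorem smp0 (hn : 1 ≤ n) {v : Heis n → ℝ} (hv : ContDiff ℝ (⊤ : ℕ∞) v) (h0 : ∀ q, 0 ≤ v q)
    (hL : ∀ q, subLap v q ≤ 0) (hp : 0 < v 0) (q : Heis n) : 0 < v q := by
  have hn' : (1 : ℝ) ≤ n := by exact_mod_cast hn
  obtain ⟨m, hm⟩ : ∃ m, m = v 0 / 2 := ⟨_, rfl⟩
  have hm0 : 0 < m := by rw [hm]; positivity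
  obtain ⟨δ, hδ, hδ1, hball⟩ : ∃ δ : ℝ, 0 < δ ∧ δ ≤ 1 ∧ ∀ x : Heis n, ‖x‖ < δ → m < v x := by
    have : ∀ᶠ x in 𝓝 (0 : Heis n), m < v x :=
      hv.continuous.continuousAt.eventually (lt_mem_nhds (by rw [hm]; linarith))
    obtain ⟨δ, hδ, h⟩ := Metric.eventually_nhds_iff.1 this
    refine ⟨min δ 1, lt_min hδ one_pos, min_le_right _ _, fun x hx => h ?_⟩
    rw [dist_zero_right]
    exact hx.trans_le (min_le_left _ _)
  obtain ⟨ρ, hρ⟩ : ∃ ρ, ρ = (δ / 2) ^ 4 := ⟨_, rfl⟩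
  have hρ0 : 0 < ρ := by rw [hρ]; positivity
  have hin : ∀ x : Heis n, NN x ≤ ρ → m < v x := by
    intro x hx
    rw [hρ] at hx
    obtain ⟨-, h1, h2⟩ := NN_le (by positivity) hx
    apply hball
    rw [Prod.norm_def, max_lt_iff]
    constructor <;> nlinarith
  by_cases hq : NN q ≤ ρ
  · exact hm0.trans (hin q hq)
  push Not at hq
  obtain ⟨a, ha⟩ : ∃ a, a = NN q + 2 := ⟨_, rfl⟩
  have ha2 : 2 ≤ a := by linarith
  have haq : NN q < a ^ 4 := by
    have : a ≤ a ^ 4 := by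
      calc a = a ^ 1 := by ring
        _ ≤ a ^ 4 := pow_le_pow_right₀ (by linarith) (by norm_num)
    linarith
  obtain ⟨α, hα⟩ : ∃ α : ℝ, α = (n + 2) / (2 * ρ) := ⟨_, rfl⟩
  have hα0 : 0 < α := by rw [hα]; positivity
  have hαρ : 2 * α * ρ = n + 2 := by rw [hα]; field_simp
  obtain ⟨K, hK⟩ : ∃ K : ℝ, K = Real.exp (-(α * a ^ 4)) := ⟨_, rfl⟩
  have hK0 : 0 < K := by rw [hK]; positivity
  have hcl : ∀ ε : ℝ, 0 < ε → m * (Real.exp (-(α * NN q)) - K) ≤ v q + ε * a ^ 2 := by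
    intro ε hε
    obtain ⟨A, hA⟩ : ∃ A : Set (Heis n), A = {x | ρ ≤ NN x ∧ NN x ≤ a ^ 4} := ⟨_, rfl⟩
    have hNc : Continuous (NN : Heis n → ℝ) := smooth_NN.continuous
    have hAc : IsCompact A := by
      refine Metric.isCompact_of_isClosed_isBounded ?_ ?_
      · rw [hA]
        exact (isClosed_le continuous_const hNc).inter (isClosed_le hNc continuous_const)
      · refine (Metric.isBounded_closedBall (x := (0 : Heis n)) (r := a ^ 2)).subset ?_
        intro x hx
        rw [hA] at hx
        obtain ⟨-, h1, h2⟩ := NN_le (by linarith) hx.2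
        rw [mem_closedBall_zero_iff, Prod.norm_def, max_le_iff]
        constructor <;> nlinarith
    have hw : ContDiff ℝ (⊤ : ℕ∞) (fun x => v x - bar m α ε x) := hv.sub (smooth_bar m α ε)
    have hqA : q ∈ A := by rw [hA]; exact ⟨hq.le, haq.le⟩
    obtain ⟨x, hxA, hx⟩ := hAc.exists_isMinOn ⟨q, hqA⟩ hw.continuous.continuousOn
    have hxq := hx hqA
    simp only [Set.mem_setOf_eq] at hxq
    have hxA' := hxA
    rw [hA] at hxA'
    obtain ⟨hx1, hx2⟩ := hxA'
    have hnx := (NN_le (by linarith) hx2).1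
    have hnq : 0 ≤ nsq q.1 := Finset.sum_nonneg fun j _ => Complex.normSq_nonneg _
    have hnx0 : 0 ≤ nsq x.1 := Finset.sum_nonneg fun j _ => Complex.normSq_nonneg _
    have e1 : ε * nsq x.1 ≤ ε * a ^ 2 := by gcongr
    have e2 : 0 ≤ ε * nsq q.1 := by positivity
    suffices hs : m * Real.exp (-(α * NN x)) - m * K ≤ v x by
      unfold bar at hxq
      linarith
    rcases eq_or_lt_of_le hx1 with h1 | h1
    · have h2 := hin x h1.ge
      have h3 : Real.exp (-(α * NN x)) ≤ 1 := by
        rw [Real.exp_le_one_iff]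
        have : 0 ≤ α * NN x := by rw [← h1]; positivity
        linarith
      have h4 : m * Real.exp (-(α * NN x)) ≤ m * 1 := by gcongr
      have h5 : 0 < m * K := by positivity
      linarith
    rcases eq_or_lt_of_le hx2 with h2 | h2
    · rw [h2, ← hK]; linarith [h0 x]
    exfalso
    have hnhds : A ∈ 𝓝 x := by
      rw [hA]
      have : IsOpen {y : Heis n | ρ < NN y ∧ NN y < a ^ 4} :=
        (isOpen_lt continuous_const hNc).inter (isOpen_lt hNc continuous_const)
      exact Filter.mem_of_superset (this.mem_nhds ⟨h1, h2⟩) fun y hy => ⟨hy.1.le, hy.2.le⟩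
    have h3 := subLap_nonneg hw (hx.isLocalMin hnhds)
    rw [subLap_sub hv (smooth_bar m α ε), subLap_bar] at h3
    have h4 : 0 ≤ 2 * α * NN x - (n + 2) := by
      have : 2 * α * ρ ≤ 2 * α * NN x := by gcongr
      linarith
    have h5 : 0 ≤ m * Real.exp (-(α * NN x)) * (8 * α * nsq x.1 * (2 * α * NN x - (n + 2))) := by
      positivity
    have h6 : 0 < 4 * n * ε := by positivity
    linarith [hL x]
  have h1 : m * (Real.exp (-(α * NN q)) - K) ≤ v q := by
    refine le_of_forall_pos_le_add fun ε hε => ?_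
    have := hcl (ε / a ^ 2) (by positivity)
    rwa [div_mul_cancel₀ _ (by positivity)] at this
  have h2 : K < Real.exp (-(α * NN q)) := by
    rw [hK, Real.exp_lt_exp]
    have : α * NN q < α * a ^ 4 := by gcongr
    linarith
  have h3 : 0 < m * (Real.exp (-(α * NN q)) - K) := by
    have : 0 < Real.exp (-(α * NN q)) - K := by linarith
    positivity
  linarith

/-- linear part of left translation -/
def tl (b : Heis n) : Heis n →L[ℝ] Heis n :=
  (ContinuousLinearMap.fst ℝ (Fin n → ℂ) ℝ).prod (ContinuousLinearMap.snd ℝ (Fin n → ℂ) ℝ +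
    (2 : ℝ) • ∑ j, ((b.1 j).im • Complex.reCLM - (b.1 j).re • Complex.imCLM).comp
      ((ContinuousLinearMap.proj (R := ℝ) (φ := fun _ : Fin n => ℂ) j).comp (ContinuousLinearMap.fst ℝ (Fin n → ℂ) ℝ)))

lemma tl_apply (b q : Heis n) : tl b q = (q.1, q.2 + 2 * ∑ j, ((b.1 j).im * (q.1 j).re - (b.1 j).re * (q.1 j).im)) := by
  simp [tl]

lemma fderiv_tr {u : Heis n → ℝ} (hu : ContDiff ℝ (⊤ : ℕ∞) u) (b q v : Heis n) :
    fderiv ℝ (fun q => u (b + tl b q)) q v = fderiv ℝ u (b + tl b q) (tl b v) := by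
  have h1 : HasFDerivAt (fun q => b + tl b q) (tl b) q := (tl b).hasFDerivAt.const_add b
  have := (hu.differentiable (by simp) (b + tl b q)).hasFDerivAt.comp q h1
  exact congrArg (fun L => L v) this.fderiv

lemma tl_X (b q : Heis n) (j : Fin n) : tl b (XVec j q) = XVec j (b + tl b q) := by
  rw [tl_apply, tl_apply]
  have : ∑ i, ((b.1 i).im * ((Pi.single j (1 : ℂ) : Fin n → ℂ) i).re - (b.1 i).re * ((Pi.single j (1 : ℂ) : Fin n → ℂ) i).im) = (b.1 j).im := by
    rw [Finset.sum_eq_single j]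
    · simp
    · intro i _ h; simp [h]
    · simp
  simp only [XVec, this]
  simp; ring
lemma tl_Y (b q : Heis n) (j : Fin n) : tl b (YVec j q) = YVec j (b + tl b q) := by
  rw [tl_apply, tl_apply]
  have : ∑ i, ((b.1 i).im * ((Pi.single j I : Fin n → ℂ) i).re - (b.1 i).re * ((Pi.single j I : Fin n → ℂ) i).im) = -(b.1 j).re := by
    rw [Finset.sum_eq_single j]
    · simp
    · intro i _ h; simp [h]
    · simp
  simp only [YVec, this]
  simp; ring

lemma subLap_tr {u : Heis n → ℝ} (hu : ContDiff ℝ (⊤ : ℕ∞) u) (b q : Heis n) :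
    subLap (fun q => u (b + tl b q)) q = subLap u (b + tl b q) := by
  have hX : ∀ {u : Heis n → ℝ}, ContDiff ℝ (⊤ : ℕ∞) u → ∀ j, Xop j (fun q => u (b + tl b q)) = fun q => Xop j u (b + tl b q) := by
    intro u hu j; funext q
    rw [Xop, fderiv_tr hu, tl_X]; rfl
  have hY : ∀ {u : Heis n → ℝ}, ContDiff ℝ (⊤ : ℕ∞) u → ∀ j, Yop j (fun q => u (b + tl b q)) = fun q => Yop j u (b + tl b q) := by
    intro u hu j; funext q
    rw [Yop, fderiv_tr hu, tl_Y]; rfl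
  unfold subLap
  refine Finset.sum_congr rfl fun j _ => ?_
  rw [hX hu, hY hu, hX (SF.smooth_X hu j), hY (SF.smooth_Y hu j)]

/-- Strong maximum principle. -/
theorem smp (hn : 1 ≤ n) {u : Heis n → ℝ} (hu : ContDiff ℝ (⊤ : ℕ∞) u) (h0 : ∀ q, 0 ≤ u q)
    (hL : ∀ q, subLap u q ≤ 0) (b : Heis n) (hb : 0 < u b) (q : Heis n) : 0 < u q := by
  have hv : ContDiff ℝ (⊤ : ℕ∞) (fun q => u (b + tl b q)) :=
    hu.comp (contDiff_const.add (tl b).contDiff)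
  have := smp0 hn hv (fun q => h0 _) (fun q => by rw [subLap_tr hu]; exact hL _) (by simpa using hb)
    (q.1 - b.1, q.2 - b.2 - 2 * ∑ j, ((b.1 j).im * (q.1 j - b.1 j).re - (b.1 j).re * (q.1 j - b.1 j).im))
  have e : b + tl b (q.1 - b.1, q.2 - b.2 - 2 * ∑ j, ((b.1 j).im * (q.1 j - b.1 j).re - (b.1 j).re * (q.1 j - b.1 j).im)) = q := by
    rw [tl_apply]
    apply Prod.ext
    · simp
    · simp
  simp only [e] at this
  exact this
end SMP

/-- Liouville theorem in the subcritical case (Ma–Ou). -/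
theorem subcritical_liouville (n : ℕ) (hn : 1 ≤ n) (Q p : ℝ) (hQ : Q = 2 * n + 2)
    (hp1 : 1 < p) (hp2 : p < (Q + 2) / (Q - 2)) :
    (¬ ∃ u : Heis n → ℝ, ContDiff ℝ (⊤ : ℕ∞) u ∧ (∀ q, 0 < u q) ∧
      ∀ q, -subLap u q = u q ^ p) ∧
    (∀ u : Heis n → ℝ, ContDiff ℝ (⊤ : ℕ∞) u → (∀ q, 0 ≤ u q) →
      (∀ q, -subLap u q = u q ^ p) → ∀ q, u q = 0) := by
  have hn' : (1 : ℝ) ≤ n := by exact_mod_cast hn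
  have hk : n * (p - 1) < 2 := by
    rw [hQ, lt_div_iff₀ (by linarith)] at hp2
    linarith
  have first : ¬ ∃ u : Heis n → ℝ, ContDiff ℝ (⊤ : ℕ∞) u ∧ (∀ q, 0 < u q) ∧
      ∀ q, -subLap u q = u q ^ p := by
    rintro ⟨u, hu, hpos, heq⟩
    exact SF.Pot.absurd (⟨u, hu, hpos, heq⟩ : SF.Pot n p) hn hp1 hk
  refine ⟨first, ?_⟩
  intro u hu h0 heq q
  by_contra hq
  refine first ⟨u, hu, ?_, heq⟩
  refine SMP.smp hn hu h0 (fun x => ?_) q (lt_of_le_of_ne (h0 q) (Ne.symm hq))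
  have h1 := heq x
  have h2 := Real.rpow_nonneg (h0 x) p
  linarith
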